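/- arXiv:0807.1967 — 4 statements merged into one kernel-verified Lean document; each statement's English description precedes it below -/
import Mathlib

section
/- The set of sums of squares of the field ℝ(X₁,…,Xₙ) of rational functions in n variables over ℝ is closed in ℝ(X₁,…,Xₙ) with respect to the topology of finitely open sets. -/
/-!
By Artin's solution of Hilbert's 17th problem, a polynomial is a sum of squares of rational
functions iff it is nonnegative on real points. If `q` is a common denominator of a
finite-dimensional space `U` of rational functions, then `u ∈ U` is a sum of squares iff the
polynomial `q ^ 2 * u` is nonnegative everywhere; so each other `x ∈ U` is separated from the sums
of squares in `U` by the linear functional `u ↦ (q ^ 2 * u)(a)`, where `(q ^ 2 * x)(a) < 0`.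

For Artin's theorem, a polynomial `p` that is not a sum of squares becomes negative in some real
closed extension `Ω` of `ℝ(X)`, and this must be pulled back to `ℝ`. This is done one coordinate at
a time: the relative algebraic closure of `S(x)` in `Ω` embeds, as an ordered field, into an
ultrapower of `S` along an ultrafilter converging to the cut of `x` in `S`, and a negative value in
an ultrapower is attained in `S` itself.
-/

open MvPolynomial MeasureTheory

noncomputable section

/-- The Euclidean (weak) topology on a real vector space; for finite-dimensional
spaces this is the usual Euclidean topology. -/
def weakTop (V : Type*) [AddCommGroup V] [Module ℝ V] : TopologicalSpace V :=
  ⨅ L : V →ₗ[ℝ] ℝ, TopologicalSpace.induced L inferInstance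

/-- The topology of finitely open sets: `O` is open iff its intersection with every
finite-dimensional subspace `U` is open in the Euclidean topology of `U`. -/
def finTop (E : Type*) [AddCommGroup E] [Module ℝ E] : TopologicalSpace E where
  IsOpen O := ∀ U : Submodule ℝ E, FiniteDimensional ℝ U →
    @IsOpen _ (weakTop U) ((Subtype.val : U → E) ⁻¹' O)
  isOpen_univ := by
    intro U _
    letI := weakTop U
    rw [Set.preimage_univ]
    exact isOpen_univ
  isOpen_inter := by
    intro s t hs ht U hU
    letI := weakTop U
    rw [Set.preimage_inter]
    exact (hs U hU).inter (ht U hU)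
  isOpen_sUnion := by
    intro s hs U hU
    letI := weakTop U
    rw [Set.preimage_sUnion]
    exact isOpen_biUnion fun t ht => hs t ht U hU

/-- The closure of a convex cone in the finest locally convex topology, via the dual
characterization: `x` lies in the closure iff `L x ≥ 0` for every linear functional `L`
nonnegative on the cone. -/
def dualClosure {E : Type*} [AddCommGroup E] [Module ℝ E] (C : Set E) : Set E :=
  {x | ∀ L : E →ₗ[ℝ] ℝ, (∀ c ∈ C, 0 ≤ L c) → 0 ≤ L x}

/-- The intermediate value property for polynomials with a strict sign change. For ordered fields
it is equivalent to `IsRealClosed`, and it is preferred to that class here because Rolle's theorem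
and the Artin–Schreier maximality argument are about sign changes. -/
class HasPolynomialIVT (R : Type*) [Field R] [LinearOrder R] : Prop where
  exists_isRoot_of_eval_mul_neg (p : Polynomial R) {a b : R} (hab : a < b)
    (h : p.eval a * p.eval b < 0) : ∃ c ∈ Set.Ioo a b, p.IsRoot c

lemma exists_eq_pow_succ_mul_not_isRoot {R : Type*} [Field R] {p : Polynomial R} {a : R}
    (hp : p ≠ 0) (ha : p.IsRoot a) :
    ∃ (m : ℕ) (q : Polynomial R), p = (Polynomial.X - Polynomial.C a) ^ (m + 1) * q ∧
      ¬ q.IsRoot a := by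
  obtain ⟨q, hpq, hq⟩ := Polynomial.exists_eq_pow_rootMultiplicity_mul_and_not_dvd p hp a
  obtain ⟨m, hm⟩ := Nat.exists_eq_add_of_lt ((Polynomial.rootMultiplicity_pos hp).2 ha)
  refine ⟨m, q, ?_, mt Polynomial.dvd_iff_isRoot.2 hq⟩
  rw [zero_add] at hm
  rwa [← hm]

namespace HasPolynomialIVT

section Rolle

variable {R : Type*} [Field R] [LinearOrder R] [IsStrictOrderedRing R] [HasPolynomialIVT R]

lemma sign_eval_eq {p : Polynomial R} {a b : R} (hab : a ≤ b)
    (h : ∀ c ∈ Set.Icc a b, ¬ p.IsRoot c) :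
    SignType.sign (p.eval a) = SignType.sign (p.eval b) := by
  have hnonneg : 0 ≤ p.eval a * p.eval b := by
    by_contra! hlt
    rcases hab.eq_or_lt with rfl | hab
    · exact (mul_self_nonneg _).not_gt hlt
    · obtain ⟨c, hc, hroot⟩ := exists_isRoot_of_eval_mul_neg p hab hlt
      exact h c (Set.Ioo_subset_Icc_self hc) hroot
  have ha : p.eval a ≠ 0 := h a (Set.left_mem_Icc.2 hab)
  have hb : p.eval b ≠ 0 := h b (Set.right_mem_Icc.2 hab)
  rcases pos_and_pos_or_neg_and_neg_of_mul_pos (hnonneg.lt_of_ne' (mul_ne_zero ha hb)) with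
    ⟨ha, hb⟩ | ⟨ha, hb⟩
  · rw [sign_pos ha, sign_pos hb]
  · rw [sign_neg ha, sign_neg hb]

/-- Writing `p = (X - a) ^ (m + 1) * (X - b) ^ (n + 1) * q`, the derivative of `p` is
`(X - a) ^ m * (X - b) ^ n` times a polynomial that changes sign between `a` and `b`. -/
lemma exists_isRoot_derivative_of_forall_not_isRoot {p : Polynomial R} {a b : R} (hab : a < b)
    (hp : p ≠ 0) (ha : p.IsRoot a) (hb : p.IsRoot b) (h : ∀ c ∈ Set.Ioo a b, ¬ p.IsRoot c) :
    ∃ c ∈ Set.Ioo a b, p.derivative.IsRoot c := by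
  obtain ⟨m, p₁, rfl, hp₁⟩ := exists_eq_pow_succ_mul_not_isRoot hp ha
  have hb₁ : p₁.IsRoot b := by simpa [sub_ne_zero.2 hab.ne'] using hb
  obtain ⟨n, q, rfl, hq⟩ := exists_eq_pow_succ_mul_not_isRoot (right_ne_zero_of_mul hp) hb₁
  have hqroot (c : R) (hc : c ∈ Set.Icc a b) : ¬ q.IsRoot c := by
    intro hqc
    rcases Set.eq_endpoints_or_mem_Ioo_of_mem_Icc hc with rfl | rfl | hc
    · exact hp₁ (by simp [hqc.eq_zero])
    · exact hq hqc
    · exact h c hc (by simp [hqc.eq_zero])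
  let u : Polynomial R := Polynomial.X - Polynomial.C a
  let v : Polynomial R := Polynomial.X - Polynomial.C b
  let g := (m + 1) * (v * q) + (n + 1) * (u * q) + u * v * q.derivative
  have hderiv : (u ^ (m + 1) * (v ^ (n + 1) * q)).derivative = u ^ m * v ^ n * g := by
    have hu : u.derivative = 1 := Polynomial.derivative_X_sub_C a
    have hv : v.derivative = 1 := Polynomial.derivative_X_sub_C b
    simp only [Polynomial.derivative_mul, Polynomial.derivative_pow_succ, hu, hv, g]
    simp only [map_add, map_natCast, map_one]
    ring
  have hgab : g.eval a * g.eval b =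
      -((m + 1) * (n + 1) * (b - a) ^ 2 * (q.eval a * q.eval b)) := by
    simp only [g, u, v, Polynomial.eval_add, Polynomial.eval_mul, Polynomial.eval_sub,
      Polynomial.eval_X, Polynomial.eval_C, Polynomial.eval_natCast, Polynomial.eval_one]
    ring
  have hqab : 0 < q.eval a * q.eval b := by
    rw [← sign_eq_one_iff, sign_mul, sign_eval_eq hab.le hqroot, ← sign_mul, sign_eq_one_iff]
    exact mul_self_pos.2 (hqroot b (Set.right_mem_Icc.2 hab.le))
  have hba : 0 < (b - a) ^ 2 := pow_pos (sub_pos.2 hab) 2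
  obtain ⟨c, hc, hroot⟩ := exists_isRoot_of_eval_mul_neg g hab <| by
    rw [hgab, neg_lt_zero]
    exact mul_pos (mul_pos (by positivity) hba) hqab
  exact ⟨c, hc, by rw [hderiv]; simp [hroot.eq_zero]⟩

theorem exists_isRoot_derivative {p : Polynomial R} {a b : R} (hab : a < b)
    (ha : p.IsRoot a) (hb : p.IsRoot b) : ∃ c ∈ Set.Ioo a b, p.derivative.IsRoot c := by
  classical
  rcases eq_or_ne p 0 with rfl | hp
  · obtain ⟨c, hac, hcb⟩ := exists_between hab
    exact ⟨c, ⟨hac, hcb⟩, by simp⟩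
  obtain ⟨c, hc, hmin⟩ := (p.roots.toFinset.filter (a < ·)).exists_min_image id
    ⟨b, by simpa [hp, hab] using hb⟩
  have mem_filter (z : R) : z ∈ p.roots.toFinset.filter (a < ·) ↔ p.IsRoot z ∧ a < z := by
    simp [hp]
  rw [mem_filter] at hc
  obtain ⟨d, ⟨had, hdc⟩, hd⟩ := exists_isRoot_derivative_of_forall_not_isRoot hc.2 hp ha hc.1
    fun z hz hroot => (hmin z ((mem_filter z).2 ⟨hroot, hz.1⟩)).not_gt hz.2
  exact ⟨d, ⟨had, hdc.trans_le (hmin b ((mem_filter b).2 ⟨hb, hab⟩))⟩, hd⟩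

lemma exists_sign_eval_eq_mul_sign_sub {p : Polynomial R} {a b r : R} (hr : r ∈ Set.Ioo a b)
    (hroot : p.IsRoot r) (h : ∀ c ∈ Set.Ioo a b, ¬ p.derivative.IsRoot c) :
    ∃ s : SignType, s ≠ 0 ∧ ∀ x ∈ Set.Icc a b,
      SignType.sign (p.eval x) = s * SignType.sign (x - r) := by
  obtain ⟨q, rfl⟩ := Polynomial.dvd_iff_isRoot.2 hroot
  have hq (c : R) (hc : c ∈ Set.Icc a b) : ¬ q.IsRoot c := by
    intro hqc
    have hpc : ((Polynomial.X - Polynomial.C r) * q).IsRoot c := by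
      simp [Polynomial.IsRoot.def, hqc.eq_zero]
    rcases lt_trichotomy c r with hlt | rfl | hlt
    · obtain ⟨d, hd, hd'⟩ := exists_isRoot_derivative hlt hpc hroot
      exact h d ⟨hc.1.trans_lt hd.1, hd.2.trans hr.2⟩ hd'
    · exact h c hr (by simp [Polynomial.IsRoot.def, hqc.eq_zero])
    · obtain ⟨d, hd, hd'⟩ := exists_isRoot_derivative hlt hroot hpc
      exact h d ⟨hr.1.trans hd.1, hd.2.trans_le hc.2⟩ hd'
  have hab : a ≤ b := (hr.1.trans hr.2).le
  refine ⟨SignType.sign (q.eval a), sign_ne_zero.2 (hq a (Set.left_mem_Icc.2 hab)),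
    fun x hx => ?_⟩
  rw [sign_eval_eq hx.1 fun c hc => hq c ⟨hc.1, hc.2.trans hx.2⟩, mul_comm]
  simp [sign_mul]

end Rolle

section Instances

lemma eval_map_coeRingHom {α S : Type*} [CommSemiring S] (l : Filter α) (p : Polynomial (α → S))
    (c : α → S) : (p.map (Filter.Germ.coeRingHom l)).eval (c : Filter.Germ l S) =
      ((fun t => (p.map (Pi.evalRingHom (fun _ => S) t)).eval (c t) : α → S) :) := by
  rw [Polynomial.eval_map]
  refine (Polynomial.eval₂_at_apply (Filter.Germ.coeRingHom (R := S) l) c).trans ?_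
  refine congrArg _ (funext fun t => ?_)
  exact (Polynomial.eval_map_apply (p := p) (Pi.evalRingHom (fun _ => S) t) c).symm

instance : HasPolynomialIVT ℝ where
  exists_isRoot_of_eval_mul_neg p a b hab h := by
    have hcont : ContinuousOn (fun x => p.eval x) (Set.Icc a b) := p.continuous.continuousOn
    rcases mul_neg_iff.1 h with ⟨ha, hb⟩ | ⟨ha, hb⟩
    · exact intermediate_value_Ioo' hab.le hcont ⟨hb, ha⟩
    · exact intermediate_value_Ioo hab.le hcont ⟨ha, hb⟩

/-- Each coefficient of a polynomial over the ultrapower is the germ of a function, so the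
polynomial is the germ of a family of polynomials over `S`, whose roots are chosen pointwise. -/
instance {α S : Type*} [Field S] [LinearOrder S] [HasPolynomialIVT S]
    (U : Ultrafilter α) : HasPolynomialIVT (Filter.Germ (U : Filter α) S) where
  exists_isRoot_of_eval_mul_neg p a b hab h := by
    obtain ⟨p, rfl⟩ : p ∈ Polynomial.lifts (Filter.Germ.coeRingHom (R := S) (U : Filter α)) := by
      rw [Polynomial.lifts_iff_coeff_lifts]
      exact fun n => (p.coeff n).inductionOn fun f => ⟨f, rfl⟩
    induction a using Filter.Germ.inductionOn with | _ a
    induction b using Filter.Germ.inductionOn with | _ b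
    let p' (t : α) : Polynomial S := p.map (Pi.evalRingHom (fun _ => S) t)
    simp only [Polynomial.coe_mapRingHom, eval_map_coeRingHom] at h ⊢
    choose! c hc using fun t (ht : a t < b t ∧ (p' t).eval (a t) * (p' t).eval (b t) < 0) =>
      exists_isRoot_of_eval_mul_neg (p' t) ht.1 ht.2
    have hc' := ((Filter.Germ.coe_lt.1 hab).and (Filter.Germ.coe_lt.1 h)).mono hc
    refine ⟨c, ⟨Filter.Germ.coe_lt.2 (hc'.mono fun t ht => ht.1.1),
      Filter.Germ.coe_lt.2 (hc'.mono fun t ht => ht.1.2)⟩,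
      (eval_map_coeRingHom _ p c).trans (Filter.Germ.coe_eq.2 (hc'.mono fun t ht => ht.2))⟩

instance (k Ω : Type*) [Field k] [Field Ω] [LinearOrder Ω] [Algebra k Ω] [HasPolynomialIVT Ω] :
    HasPolynomialIVT (algebraicClosure k Ω) where
  exists_isRoot_of_eval_mul_neg p a b hab h := by
    have heval (c : algebraicClosure k Ω) : (p.map (algebraMap _ Ω)).eval (c : Ω) =
        (p.eval c : algebraicClosure k Ω) :=
      Polynomial.eval_map_apply (algebraMap (algebraicClosure k Ω) Ω) c
    obtain ⟨c, hc, hroot⟩ := exists_isRoot_of_eval_mul_neg (p.map (algebraMap _ Ω))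
      (show (a : Ω) < b from hab) (by
        rw [heval, heval]
        exact h)
    have hp : p ≠ 0 := by
      rintro rfl
      simp at h
    have hcK : c ∈ algebraicClosure k Ω :=
      mem_algebraicClosure_iff.2 (IsAlgebraic.restrictScalars k
        (⟨p, hp, by rwa [Polynomial.IsRoot, Polynomial.eval_map_algebraMap] at hroot⟩ :
          IsAlgebraic (algebraicClosure k Ω) c))
    refine ⟨⟨c, hcK⟩, hc, Subtype.ext ?_⟩
    rw [← heval]
    exact hroot

end Instances

end HasPolynomialIVT

section SumSq

lemma isSumSq_map {A B : Type*} [Semiring A] [Semiring B] (φ : A →+* B) {a : A}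
    (h : IsSumSq a) : IsSumSq (φ a) := by
  induction h with
  | zero => simp
  | sq_add a _ ih =>
    rw [map_add, map_mul]
    exact IsSumSq.sq_add _ ih

variable {E : Type*} [Field E]

lemma isSumSq_div {a b : E} (ha : IsSumSq a) (hb : IsSumSq b) : IsSumSq (a / b) := by
  have h : a / b = a * b * (b⁻¹ * b⁻¹) := by
    rcases eq_or_ne b 0 with rfl | hb
    · simp
    · field_simp
  rw [h]
  exact (ha.mul hb).mul (IsSumSq.mul_self _)

lemma isSumSq_of_isSumSq_neg_one [CharZero E] (h : IsSumSq (-1 : E)) (f : E) : IsSumSq f := by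
  have hf : f = (f + 1) / 2 * ((f + 1) / 2) + (-1) * ((f - 1) / 2 * ((f - 1) / 2)) := by
    field_simp
    ring
  rw [hf]
  exact (IsSumSq.mul_self _).add (h.mul (IsSumSq.mul_self _))

lemma exists_linearOrder_of_isSumSq_or_isSumSq_neg (h₁ : ¬ IsSumSq (-1 : E))
    (h : ∀ a : E, IsSumSq a ∨ IsSumSq (-a)) : ∃ _ : LinearOrder E, IsStrictOrderedRing E := by
  classical
  let C : RingCone E :=
    { Subsemiring.sumSq E with
      eq_zero_of_mem_of_neg_mem' := by
        intro a ha hna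
        by_contra ha0
        rw [← neg_div_self ha0] at h₁
        exact h₁ (isSumSq_div (Subsemiring.mem_sumSq.1 hna) (Subsemiring.mem_sumSq.1 ha)) }
  have : HasMemOrNegMem C :=
    ⟨fun a => (h a).imp Subsemiring.mem_sumSq.2 Subsemiring.mem_sumSq.2⟩
  let : LinearOrder E := LinearOrder.mkOfAddGroupCone C
  have : IsOrderedRing E := IsOrderedRing.mkOfCone C
  exact ⟨inferInstance, IsOrderedRing.toIsStrictOrderedRing E⟩

variable {A : Type*} [Field A] [Algebra E A]

lemma exists_isSumSq_polynomial_aeval_eq {s : A} (hs : IsIntegral E s)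
    {z : IntermediateField.adjoin E {s}} (hz : IsSumSq z) :
    ∃ σ : Polynomial E, IsSumSq σ ∧ σ.natDegree ≤ 2 * ((minpoly E s).natDegree - 1) ∧
      Polynomial.aeval s σ = (z : A) := by
  induction hz with
  | zero => exact ⟨0, IsSumSq.zero, by simp, by simp⟩
  | sq_add a _ ih =>
    obtain ⟨σ, hσ, hdeg, hσs⟩ := ih
    obtain ⟨g, hg, rfl⟩ := (IntermediateField.adjoin.powerBasis hs).exists_eq_aeval a
    rw [IntermediateField.adjoin.powerBasis_dim] at hg
    rw [IntermediateField.adjoin.powerBasis_gen]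
    refine ⟨g * g + σ, IsSumSq.sq_add g hσ, ?_, ?_⟩
    · refine Polynomial.natDegree_add_le_of_degree_le ?_ hdeg
      exact Polynomial.natDegree_mul_le.trans (by omega)
    · simp [hσs]

lemma exists_one_add_eq_mul_of_isSumSq_neg_one {p : Polynomial E} (hp : Irreducible p) {s : A}
    (hs : Polynomial.aeval s p = 0) (h : IsSumSq (-1 : IntermediateField.adjoin E {s})) :
    ∃ σ g : Polynomial E, IsSumSq σ ∧ 1 + σ = p * g ∧ g.natDegree ≤ p.natDegree - 2 := by
  have hint : IsIntegral E s := isAlgebraic_iff_isIntegral.1 ⟨p, hp.ne_zero, hs⟩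
  obtain ⟨σ, hσ, hdeg, hσs⟩ := exists_isSumSq_polynomial_aeval_eq hint h
  obtain ⟨g, hg⟩ : p ∣ 1 + σ := (hp.dvd_iff_aeval_eq_zero hs).1 (by simp [hσs])
  have hmin : (minpoly E s).natDegree = p.natDegree := by
    rw [← minpoly.eq_of_irreducible hp hs, Polynomial.natDegree_mul_leadingCoeff_inv _ hp.ne_zero]
  refine ⟨σ, g, hσ, hg, ?_⟩
  rcases eq_or_ne g 0 with rfl | hg0
  · simp
  · have hdeg' : (1 + σ).natDegree ≤ 2 * (p.natDegree - 1) :=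
      Polynomial.natDegree_add_le_of_degree_le (by simp) (hmin ▸ hdeg)
    rw [hg, Polynomial.natDegree_mul hp.ne_zero hg0] at hdeg'
    omega

lemma isSumSq_neg_one_of_isSumSq_neg_one_adjoin_algebraMap {b : E}
    (h : IsSumSq (-1 : IntermediateField.adjoin E {algebraMap E A b})) : IsSumSq (-1 : E) := by
  obtain ⟨σ, hσ, -, hσb⟩ := exists_isSumSq_polynomial_aeval_eq isIntegral_algebraMap h
  have hσb' : σ.eval b = -1 := (algebraMap E A).injective <| by
    rw [← Polynomial.aeval_algebraMap_apply_eq_algebraMap_eval, hσb]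
    simp
  exact hσb' ▸ isSumSq_map (Polynomial.evalRingHom b) hσ

/-- With `1 + σ = c * (X ^ 2 - a)`, evaluation at `(a + 1) / 2`, where `X ^ 2 - a` is a square,
shows that `c` is a sum of squares, and evaluation at `0` then does so for `-a`. -/
lemma isSumSq_neg_of_isSumSq_neg_one_adjoin_sqrt [CharZero E] (h₁ : ¬ IsSumSq (-1 : E)) {a : E}
    {r : A} (hr : r * r = algebraMap E A a) (h : IsSumSq (-1 : IntermediateField.adjoin E {r})) :
    IsSumSq (-a) := by
  have hsq (b : E) : b ^ 2 ≠ a := by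
    rintro rfl
    obtain ⟨b, rfl⟩ : ∃ b' : E, algebraMap E A b' = r := by
      rcases mul_self_eq_mul_self_iff.1 (hr.trans (by rw [pow_two, map_mul])) with rfl | rfl
      · exact ⟨b, rfl⟩
      · exact ⟨-b, map_neg _ _⟩
    exact h₁ (isSumSq_neg_one_of_isSumSq_neg_one_adjoin_algebraMap h)
  have hirr := X_pow_sub_C_irreducible_of_prime Nat.prime_two hsq
  obtain ⟨σ, g, hσ, hg, hdeg⟩ :=
    exists_one_add_eq_mul_of_isSumSq_neg_one hirr (by simp [pow_two, hr]) h
  rw [Polynomial.natDegree_X_pow_sub_C, Nat.sub_self, Nat.le_zero] at hdeg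
  obtain ⟨c, rfl⟩ := Polynomial.natDegree_eq_zero.1 hdeg
  have heval (x : E) : 1 + σ.eval x = (x ^ 2 - a) * c := by
    simpa using congrArg (Polynomial.eval x) hg
  have hσ' (x : E) : IsSumSq (1 + σ.eval x) :=
    IsSumSq.one.add (isSumSq_map (Polynomial.evalRingHom x) hσ)
  have hc : IsSumSq c := by
    have ha : a - 1 ≠ 0 := sub_ne_zero.2 (by simpa using (hsq 1).symm)
    have hc' : c = (1 + σ.eval ((a + 1) / 2)) / ((a - 1) / 2 * ((a - 1) / 2)) := by
      rw [heval]
      field_simp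
      ring
    rw [hc']
    exact isSumSq_div (hσ' _) (IsSumSq.mul_self _)
  have hc0 : c ≠ 0 := by
    rintro rfl
    refine h₁ ?_
    rw [neg_eq_of_add_eq_zero_right ((heval 0).trans (mul_zero _))]
    exact isSumSq_map (Polynomial.evalRingHom 0) hσ
  have ha : -a = (1 + σ.eval 0) / c := by
    rw [heval]
    field_simp
    ring
  rw [ha]
  exact isSumSq_div (hσ' 0) hc

end SumSq

section ArtinSchreier

section Irreducible

variable {E : Type*} [Field E] [LinearOrder E] [IsStrictOrderedRing E]

lemma exists_irreducible_dvd_eval_mul_neg {p : Polynomial E} {a b : E}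
    (h : p.eval a * p.eval b < 0) :
    ∃ q : Polynomial E, Irreducible q ∧ q ∣ p ∧ q.eval a * q.eval b < 0 := by
  induction p using WfDvdMonoid.induction_on_irreducible with
  | zero => simp at h
  | unit u hu =>
    obtain ⟨c, -, rfl⟩ := Polynomial.isUnit_iff.1 hu
    rw [Polynomial.eval_C, Polynomial.eval_C] at h
    exact absurd h (mul_self_nonneg c).not_gt
  | mul p q _ hq ih =>
    rw [Polynomial.eval_mul, Polynomial.eval_mul, mul_mul_mul_comm] at h
    rcases mul_neg_iff.1 h with ⟨-, hp⟩ | ⟨hq', -⟩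
    · obtain ⟨r, hr, hdvd, hneg⟩ := ih hp
      exact ⟨r, hr, hdvd.mul_left q, hneg⟩
    · exact ⟨q, hq, dvd_mul_right q p, hq'⟩

lemma mem_Ioo_of_irreducible_of_isRoot {p : Polynomial E} (hp : Irreducible p) {a b s : E}
    (hab : a < b) (h : p.eval a * p.eval b < 0) (hs : p.IsRoot s) : s ∈ Set.Ioo a b := by
  obtain ⟨q, rfl⟩ := Polynomial.dvd_iff_isRoot.2 hs
  obtain ⟨c, -, rfl⟩ := Polynomial.isUnit_iff.1
    ((hp.isUnit_or_isUnit rfl).resolve_left (Polynomial.not_isUnit_X_sub_C s))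
  have hneg : (a - s) * (b - s) * (c * c) < 0 := by
    simpa [mul_mul_mul_comm] using h
  rcases mul_neg_iff.1 (neg_of_mul_neg_left hneg (mul_self_nonneg c)) with ⟨ha, hb⟩ | ⟨ha, hb⟩
  · exact absurd hab (by linarith)
  · exact ⟨sub_neg.1 ha, sub_pos.1 hb⟩

end Irreducible

/-- If an irreducible `p` has no root in `E`, then `1 + σ = p * g` with `σ` a sum of squares; so `g`
changes sign with `p`, but it has smaller degree and cannot have a root. -/
lemma hasPolynomialIVT_of_forall_isSumSq_neg_one_adjoin {E A : Type*} [Field E] [LinearOrder E]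
    [IsStrictOrderedRing E] [Field A] [IsAlgClosed A] [Algebra E A]
    (h : ∀ s : A, s ∉ Set.range (algebraMap E A) →
      IsSumSq (-1 : IntermediateField.adjoin E {s})) : HasPolynomialIVT E where
  exists_isRoot_of_eval_mul_neg p a b hab hp := by
    induction hn : p.natDegree using Nat.strong_induction_on generalizing p with
    | _ n ih =>
    obtain ⟨q, hirr, hqp, hq⟩ := exists_irreducible_dvd_eval_mul_neg hp
    obtain ⟨s, hs⟩ := IsAlgClosed.exists_aeval_eq_zero A q hirr.degree_pos.ne'
    by_cases hsE : s ∈ Set.range (algebraMap E A)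
    · obtain ⟨s, rfl⟩ := hsE
      have hs' : q.IsRoot s := (algebraMap E A).injective <| by
        rw [← Polynomial.aeval_algebraMap_apply_eq_algebraMap_eval, hs, map_zero]
      exact ⟨s, mem_Ioo_of_irreducible_of_isRoot hirr hab hq hs', hs'.dvd hqp⟩
    · obtain ⟨σ, g, hσ, hg, hdeg⟩ := exists_one_add_eq_mul_of_isSumSq_neg_one hirr hs (h s hsE)
      have hpos (x : E) : 0 < q.eval x * g.eval x := by
        rw [← Polynomial.eval_mul, ← hg, Polynomial.eval_add, Polynomial.eval_one]
        exact add_pos_of_pos_of_nonneg one_pos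
          (isSumSq_map (Polynomial.evalRingHom x) hσ).nonneg
      have hgneg : g.eval a * g.eval b < 0 := by
        have := mul_pos (hpos a) (hpos b)
        rw [mul_mul_mul_comm] at this
        exact neg_of_mul_pos_right this hq.le
      have hlt : g.natDegree < n := by
        have hp0 : p ≠ 0 := by
          rintro rfl
          simp at hp
        have := Polynomial.natDegree_le_of_dvd hqp hp0
        have := hirr.natDegree_pos
        omega
      obtain ⟨c, -, hc⟩ := ih g.natDegree hlt g hgneg rfl
      exact absurd (hpos c) (by simp [hc.eq_zero])

lemma isSumSq_sSup {F A : Type*} [Field F] [Field A] [Algebra F A]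
    {c : Set (IntermediateField F A)} (hc : IsChain (· ≤ ·) c) (hne : c.Nonempty)
    {z : (sSup c : IntermediateField F A)} (hz : IsSumSq z) :
    ∃ E ∈ c, ∃ z' : E, (z' : A) = z ∧ IsSumSq z' := by
  have : Nonempty c := hne.to_subtype
  have hmem {a : A} (ha : a ∈ sSup c) : ∃ E ∈ c, a ∈ E := by
    rw [sSup_eq_iSup', ← SetLike.mem_coe,
      IntermediateField.coe_iSup_of_directed hc.directed] at ha
    obtain ⟨E, hE⟩ := Set.mem_iUnion.1 ha
    exact ⟨E, E.2, hE⟩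
  induction hz with
  | zero =>
    obtain ⟨E, hE⟩ := hne
    exact ⟨E, hE, 0, rfl, IsSumSq.zero⟩
  | sq_add a _ ih =>
    obtain ⟨E, hE, z', hz', hs⟩ := ih
    obtain ⟨E', hE', ha⟩ := hmem a.2
    rcases hc.total hE hE' with h | h
    · refine ⟨E', hE', ⟨a, ha⟩ * ⟨a, ha⟩ + IntermediateField.inclusion h z', ?_,
        IsSumSq.sq_add _ (isSumSq_map (IntermediateField.inclusion h : E →+* E') hs)⟩
      simp [hz']
    · refine ⟨E, hE, ⟨a, h ha⟩ * ⟨a, h ha⟩ + z', ?_, IsSumSq.sq_add _ hs⟩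
      simp [hz']

lemma exists_maximal_not_isSumSq_neg_one {F A : Type*} [Field F] [Field A] [Algebra F A]
    (E₀ : IntermediateField F A) (h₀ : ¬ IsSumSq (-1 : E₀)) :
    ∃ E, E₀ ≤ E ∧ Maximal (fun E : IntermediateField F A => ¬ IsSumSq (-1 : E)) E := by
  refine zorn_le_nonempty₀ _ (fun c hc hchain E₁ hE₁ => ?_) E₀ h₀
  refine ⟨sSup c, fun h => ?_, fun E hE => le_sSup hE⟩
  obtain ⟨E, hE, z, hz, hs⟩ := isSumSq_sSup hchain ⟨E₁, hE₁⟩ h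
  have hz' : z = -1 := Subtype.ext (by simpa using hz)
  exact hc hE (hz' ▸ hs)

lemma isSumSq_neg_one_adjoin_of_maximal {F A : Type*} [Field F] [Field A] [Algebra F A]
    {E : IntermediateField F A}
    (hE : Maximal (fun E : IntermediateField F A => ¬ IsSumSq (-1 : E)) E) {s : A}
    (hs : s ∉ Set.range (algebraMap E A)) : IsSumSq (-1 : IntermediateField.adjoin E {s}) := by
  by_contra hneg
  have hle : IntermediateField.restrictScalars F (IntermediateField.adjoin E {s}) ≤ E :=
    hE.2 (y := IntermediateField.restrictScalars F (IntermediateField.adjoin E {s})) hneg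
      fun a ha => (IntermediateField.adjoin E {s}).algebraMap_mem ⟨a, ha⟩
  exact hs ⟨⟨s, hle (IntermediateField.mem_adjoin_simple_self E s)⟩, rfl⟩

/-- Adjoin `r = √(-f)` and then pass to a maximal algebraic extension in which `-1` is not a sum
of squares: there `f = -r ^ 2` is negative. -/
theorem exists_hasPolynomialIVT_neg.{u} (F : Type u) [Field F] [CharZero F] {f : F}
    (hf : ¬ IsSumSq f) :
    ∃ (Ω : Type u) (_ : Field Ω) (_ : LinearOrder Ω) (_ : IsStrictOrderedRing Ω)
      (_ : HasPolynomialIVT Ω) (ι : F →+* Ω), ι f < 0 := by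
  let A := AlgebraicClosure F
  obtain ⟨r, hr⟩ := IsAlgClosed.exists_eq_mul_self (algebraMap F A (-f))
  have hF : ¬ IsSumSq (-1 : F) := fun h => hf (isSumSq_of_isSumSq_neg_one h f)
  obtain ⟨E, hrE, hE⟩ := exists_maximal_not_isSumSq_neg_one (IntermediateField.adjoin F {r})
    fun h => hf (by simpa using isSumSq_neg_of_isSumSq_neg_one_adjoin_sqrt hF hr.symm h)
  have hadjoin (s : A) (hs : s ∉ Set.range (algebraMap E A)) :
      IsSumSq (-1 : IntermediateField.adjoin E {s}) := isSumSq_neg_one_adjoin_of_maximal hE hs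
  have htotal (a : E) : IsSumSq a ∨ IsSumSq (-a) := by
    obtain ⟨s, hs⟩ := IsAlgClosed.exists_eq_mul_self (algebraMap E A a)
    by_cases hsE : s ∈ Set.range (algebraMap E A)
    · obtain ⟨s, rfl⟩ := hsE
      refine Or.inl ?_
      rw [← map_mul] at hs
      rw [(algebraMap E A).injective hs]
      exact IsSumSq.mul_self s
    · exact Or.inr (isSumSq_neg_of_isSumSq_neg_one_adjoin_sqrt hE.prop hs.symm (hadjoin s hsE))
  obtain ⟨_, _⟩ := exists_linearOrder_of_isSumSq_or_isSumSq_neg hE.prop htotal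
  refine ⟨E, inferInstance, inferInstance, inferInstance,
    hasPolynomialIVT_of_forall_isSumSq_neg_one_adjoin hadjoin, algebraMap F E, ?_⟩
  let r' : E := ⟨r, hrE (IntermediateField.mem_adjoin_simple_self F r)⟩
  have hr' : algebraMap F E (-f) = r' * r' := Subtype.ext hr
  have hr0 : r' ≠ 0 := by
    rintro h
    rw [h, mul_zero, map_eq_zero, neg_eq_zero] at hr'
    exact hf (hr' ▸ IsSumSq.zero)
  rw [← neg_pos, ← map_neg, hr']
  exact mul_self_pos.2 hr0

end ArtinSchreier

section Cut

lemma exists_forall_lt_iff_lt {α β : Type*} [LinearOrder α] [DenselyOrdered α] [NoMinOrder α]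
    [NoMaxOrder α] [Nonempty α] [LinearOrder β] {f : α → β} (hf : StrictMono f) {x : β}
    (hx : x ∉ Set.range f) (Z : Finset α) : ∃ t, ∀ z ∈ Z, z ≠ t ∧ (z < t ↔ f z < x) := by
  obtain ⟨t, hlo, hhi⟩ := Order.exists_between_finsets {z ∈ Z | f z < x} {z ∈ Z | x < f z}
    fun y hy z hz => hf.lt_iff_lt.1 ((Finset.mem_filter.1 hy).2.trans (Finset.mem_filter.1 hz).2)
  refine ⟨t, fun z hz => ?_⟩
  rcases lt_or_gt_of_ne fun h : f z = x => hx ⟨z, h⟩ with hzx | hzx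
  · have hzt := hlo z (Finset.mem_filter.2 ⟨hz, hzx⟩)
    exact ⟨hzt.ne, iff_of_true hzt hzx⟩
  · have htz := hhi z (Finset.mem_filter.2 ⟨hz, hzx⟩)
    exact ⟨htz.ne', iff_of_false htz.not_gt hzx.not_gt⟩

lemma exists_forall_notMem_Ioo {α β : Type*} [LinearOrder α] [LinearOrder β] {f : α → β} {x : β}
    (hx : x ∉ Set.range f) {a₀ b₀ : α} (hx₀ : x ∈ Set.Ioo (f a₀) (f b₀)) (Z : Finset α) :
    ∃ a b, x ∈ Set.Ioo (f a) (f b) ∧ ∀ z ∈ Z, z ∉ Set.Ioo a b := by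
  obtain ⟨a, ha, hmax⟩ := ({z ∈ insert a₀ Z | f z < x}).exists_max_image id
    ⟨a₀, by simp [hx₀.1]⟩
  obtain ⟨b, hb, hmin⟩ := ({z ∈ insert b₀ Z | x < f z}).exists_min_image id
    ⟨b₀, by simp [hx₀.2]⟩
  refine ⟨a, b, ⟨(Finset.mem_filter.1 ha).2, (Finset.mem_filter.1 hb).2⟩, fun z hz hzab => ?_⟩
  rcases lt_or_gt_of_ne fun h : f z = x => hx ⟨z, h⟩ with hzx | hzx
  · exact (hmax z (by simp [hz, hzx])).not_gt hzab.1
  · exact (hmin z (by simp [hz, hzx])).not_gt hzab.2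

lemma abs_lt_one_add_sum_abs_coeff {F : Type*} [Field F] [LinearOrder F] [IsStrictOrderedRing F]
    {p : Polynomial F} (hp : p.Monic) {x : F} (hx : p.IsRoot x) :
    |x| < 1 + ∑ k ∈ Finset.range p.natDegree, |p.coeff k| := by
  by_contra! hB
  have hB₀ : 0 ≤ ∑ k ∈ Finset.range p.natDegree, |p.coeff k| :=
    Finset.sum_nonneg fun k _ => abs_nonneg _
  have hx₁ : 1 ≤ |x| := by linarith
  obtain ⟨m, hm⟩ : ∃ m, p.natDegree = m + 1 := Nat.exists_eq_succ_of_ne_zero fun hn => by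
    simp [hp.natDegree_eq_zero.1 hn] at hx
  have hpow : x ^ p.natDegree = -∑ k ∈ Finset.range p.natDegree, p.coeff k * x ^ k := by
    rw [eq_neg_iff_add_eq_zero, ← hx.eq_zero, Polynomial.eval_eq_sum_range, Finset.sum_range_succ,
      hp.coeff_natDegree, one_mul, add_comm]
  have hle : |x| ^ p.natDegree ≤ (∑ k ∈ Finset.range p.natDegree, |p.coeff k|) * |x| ^ m := calc
    |x| ^ p.natDegree ≤ ∑ k ∈ Finset.range p.natDegree, |p.coeff k * x ^ k| := by
      rw [← abs_pow, hpow, abs_neg]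
      exact Finset.abs_sum_le_sum_abs _ _
    _ ≤ ∑ k ∈ Finset.range p.natDegree, |p.coeff k| * |x| ^ m := by
      refine Finset.sum_le_sum fun k hk => ?_
      rw [abs_mul, abs_pow]
      have hkm : k ≤ m := by grind
      gcongr
    _ = _ := (Finset.sum_mul ..).symm
  have hxm : |x| ^ p.natDegree = |x| * |x| ^ m := by rw [hm, pow_succ']
  rw [hxm] at hle
  have := le_of_mul_le_mul_right hle (by positivity)
  linarith

lemma sign_aeval_algebraMap {E Ω : Type*} [Field E] [LinearOrder E] [Field Ω] [LinearOrder Ω]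
    [Algebra E Ω] (hΩ : StrictMono (algebraMap E Ω)) (g : Polynomial E) (e : E) :
    SignType.sign (Polynomial.aeval (algebraMap E Ω e) g) = SignType.sign (g.eval e) := by
  rw [Polynomial.aeval_algebraMap_apply_eq_algebraMap_eval,
    hΩ.sign_comp (f := (algebraMap E Ω))]

end Cut

section SameCut

/-- The field `Ω` contributes nothing to `E` in degrees below `d`: this is the induction hypothesis
under which cuts of `E` determine signs of polynomials of degree less than `d`. -/
def ContainsRootsOfDegreeLT (E Ω : Type*) [Field E] [Field Ω] [Algebra E Ω] (d : ℕ) : Prop :=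
  ∀ x : Ω, IsIntegral E x → (minpoly E x).natDegree < d → x ∈ Set.range (algebraMap E Ω)

/-- Elements of two ordered extensions of `E` determine the same Dedekind cut of `E`. -/
def SameCut (E : Type*) {Ω R : Type*} [Field E] [Field Ω] [LinearOrder Ω] [Field R]
    [LinearOrder R] [Algebra E Ω] [Algebra E R] (x : Ω) (y : R) : Prop :=
  ∀ e : E, SignType.sign (algebraMap E Ω e - x) = SignType.sign (algebraMap E R e - y)

lemma ContainsRootsOfDegreeLT.mem_range {E Ω : Type*} [Field E] [Field Ω] [Algebra E Ω] {d : ℕ}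
    (h : ContainsRootsOfDegreeLT E Ω d) {g : Polynomial E} (hg : g ≠ 0) (hgd : g.natDegree < d)
    {x : Ω} (hx : Polynomial.aeval x g = 0) : x ∈ Set.range (algebraMap E Ω) :=
  h x (IsAlgebraic.isIntegral ⟨g, hg, hx⟩)
    ((Polynomial.natDegree_le_of_dvd (minpoly.dvd E x hx) hg).trans_lt hgd)

variable {E Ω R : Type*} [Field E] [Field Ω] [LinearOrder Ω] [Algebra E Ω]
  [Field R] [LinearOrder R] [Algebra E R]

lemma SameCut.notMem_range {x : Ω} {y : R} (h : SameCut E x y)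
    (hx : x ∉ Set.range (algebraMap E Ω)) : y ∉ Set.range (algebraMap E R) := by
  rintro ⟨e, rfl⟩
  have he := h e
  rw [sub_self, sign_zero, sign_eq_zero_iff, sub_eq_zero] at he
  exact hx ⟨e, he⟩

variable [IsStrictOrderedRing Ω] [IsStrictOrderedRing R]

lemma SameCut.lt_iff_lt {x : Ω} {y : R} (h : SameCut E x y) (e : E) :
    algebraMap E Ω e < x ↔ algebraMap E R e < y := by
  rw [← sub_neg, ← sign_eq_neg_one_iff, h e, sign_eq_neg_one_iff, sub_neg]

variable [LinearOrder E]

lemma sign_aeval_eq_sign_eval [HasPolynomialIVT Ω] (hΩ : StrictMono (algebraMap E Ω)) {x : Ω}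
    (hx : x ∉ Set.range (algebraMap E Ω)) {g : Polynomial E} {t : E}
    (hg : ∀ z : Ω, Polynomial.aeval z g = 0 → z ∈ Set.range (algebraMap E Ω))
    (ht : ∀ z, g.IsRoot z → z ≠ t ∧ (z < t ↔ algebraMap E Ω z < x)) :
    SignType.sign (Polynomial.aeval x g) = SignType.sign (g.eval t) := by
  have hroot {c : Ω} (hc : (g.map (algebraMap E Ω)).IsRoot c) :
      ∃ z, algebraMap E Ω z = c ∧ z ≠ t ∧ (z < t ↔ algebraMap E Ω z < x) := by
    rw [Polynomial.IsRoot, Polynomial.eval_map_algebraMap] at hc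
    obtain ⟨z, rfl⟩ := hg c hc
    rw [Polynomial.aeval_algebraMap_apply_eq_algebraMap_eval, map_eq_zero] at hc
    exact ⟨z, rfl, ht z hc⟩
  rw [← sign_aeval_algebraMap hΩ, ← Polynomial.eval_map_algebraMap,
    ← Polynomial.eval_map_algebraMap]
  rcases le_total x (algebraMap E Ω t) with hxt | htx
  · refine HasPolynomialIVT.sign_eval_eq hxt fun c hc hroot' => ?_
    obtain ⟨z, rfl, hzt, hz⟩ := hroot hroot'
    exact ((hz.1 ((hΩ.le_iff_le.1 hc.2).lt_of_ne hzt)).trans_le hc.1).false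
  · refine (HasPolynomialIVT.sign_eval_eq htx fun c hc hroot' => ?_).symm
    obtain ⟨z, rfl, -, hz⟩ := hroot hroot'
    have hzx : algebraMap E Ω z < x := hc.2.lt_of_ne fun h => hx ⟨z, h⟩
    exact ((hz.2 hzx).trans_le (hΩ.le_iff_le.1 hc.1)).false

lemma sameCut_of_forall_mem_Icc (hΩ : StrictMono (algebraMap E Ω))
    (hR : StrictMono (algebraMap E R)) {a b : E} {x : Ω} {y : R}
    (hx : x ∈ Set.Ioo (algebraMap E Ω a) (algebraMap E Ω b))
    (hy : y ∈ Set.Ioo (algebraMap E R a) (algebraMap E R b))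
    (h : ∀ e ∈ Set.Icc a b,
      SignType.sign (algebraMap E Ω e - x) = SignType.sign (algebraMap E R e - y)) :
    SameCut E x y := by
  intro e
  rcases lt_or_ge e a with hea | hae
  · rw [sign_neg (sub_neg.2 ((hΩ hea).trans hx.1)), sign_neg (sub_neg.2 ((hR hea).trans hy.1))]
  rcases lt_or_ge b e with hbe | heb
  · rw [sign_pos (sub_pos.2 (hx.2.trans (hΩ hbe))), sign_pos (sub_pos.2 (hy.2.trans (hR hbe)))]
  · exact h e ⟨hae, heb⟩

lemma ContainsRootsOfDegreeLT.exists_sign_eval_eq {p : Polynomial E}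
    [HasPolynomialIVT Ω] (hpΩ : ContainsRootsOfDegreeLT E Ω p.natDegree)
    (hΩ : StrictMono (algebraMap E Ω)) (hp : p.derivative ≠ 0) {a b : E}
    (hab : ∀ z, p.derivative.IsRoot z → z ∉ Set.Ioo a b) {x : Ω}
    (hx : x ∈ Set.Ioo (algebraMap E Ω a) (algebraMap E Ω b)) (hpx : Polynomial.aeval x p = 0) :
    ∃ s : SignType, s ≠ 0 ∧ ∀ e ∈ Set.Icc a b,
      SignType.sign (p.eval e) = s * SignType.sign (algebraMap E Ω e - x) := by
  have hdeg : p.derivative.natDegree < p.natDegree :=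
    Polynomial.natDegree_derivative_lt (mt Polynomial.derivative_of_natDegree_zero hp)
  obtain ⟨s, hs, h⟩ := HasPolynomialIVT.exists_sign_eval_eq_mul_sign_sub hx
    (p := p.map (algebraMap E Ω)) (by rwa [Polynomial.IsRoot, Polynomial.eval_map_algebraMap]) <| by
      intro c hc hroot
      rw [Polynomial.derivative_map, Polynomial.IsRoot, Polynomial.eval_map_algebraMap] at hroot
      obtain ⟨z, rfl⟩ := hpΩ.mem_range hp hdeg hroot
      rw [Polynomial.aeval_algebraMap_apply_eq_algebraMap_eval, map_eq_zero] at hroot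
      exact hab z hroot ⟨hΩ.lt_iff_lt.1 hc.1, hΩ.lt_iff_lt.1 hc.2⟩
  refine ⟨s, hs, fun e he => ?_⟩
  rw [← h _ ⟨hΩ.monotone he.1, hΩ.monotone he.2⟩, Polynomial.eval_map_algebraMap,
    sign_aeval_algebraMap hΩ]

variable [IsStrictOrderedRing E]

lemma exists_mem_Ioo_of_isIntegral (hΩ : StrictMono (algebraMap E Ω)) {x : Ω}
    (hx : IsIntegral E x) : ∃ a b : E, x ∈ Set.Ioo (algebraMap E Ω a) (algebraMap E Ω b) := by
  obtain ⟨p, hp, hpx⟩ := hx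
  have hcoeff (c : E) : |algebraMap E Ω c| = algebraMap E Ω |c| := by
    rcases abs_cases c with ⟨h, hc⟩ | ⟨h, hc⟩
    · rw [h, abs_of_nonneg (by simpa using hΩ.monotone hc)]
    · rw [h, map_neg, abs_of_neg (by simpa using hΩ hc)]
  have hB := abs_lt_one_add_sum_abs_coeff (hp.map (algebraMap E Ω))
    (by rwa [Polynomial.IsRoot, Polynomial.eval_map] : (p.map (algebraMap E Ω)).IsRoot x)
  let B := 1 + ∑ k ∈ Finset.range p.natDegree, |p.coeff k|
  refine ⟨-B, B, ?_⟩
  rw [map_neg, Set.mem_Ioo, ← abs_lt]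
  simpa [B, hcoeff] using hB

variable [HasPolynomialIVT Ω] [HasPolynomialIVT R]

theorem SameCut.sign_aeval_eq (hΩ : StrictMono (algebraMap E Ω)) (hR : StrictMono (algebraMap E R))
    {x : Ω} {y : R} (h : SameCut E x y) (hx : x ∉ Set.range (algebraMap E Ω)) {d : ℕ}
    (hdΩ : ContainsRootsOfDegreeLT E Ω d) (hdR : ContainsRootsOfDegreeLT E R d)
    {g : Polynomial E} (hgd : g.natDegree < d) :
    SignType.sign (Polynomial.aeval x g) = SignType.sign (Polynomial.aeval y g) := by
  classical
  rcases eq_or_ne g 0 with rfl | hg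
  · simp
  obtain ⟨t, ht⟩ := exists_forall_lt_iff_lt hΩ hx g.roots.toFinset
  replace ht (z : E) (hz : g.IsRoot z) := ht z (by simpa [hg] using hz)
  rw [sign_aeval_eq_sign_eval hΩ hx (fun z => hdΩ.mem_range hg hgd) ht,
    sign_aeval_eq_sign_eval hR (h.notMem_range hx) (fun z => hdR.mem_range hg hgd) fun z hz => ?_]
  rw [← h.lt_iff_lt]
  exact ht z hz

/-- On an interval of `E` around `x` free of roots of the derivative, the minimal polynomial of `x`
has a single sign change, so its signs at points of `E` encode the cut. -/
theorem exists_sameCut (hΩ : StrictMono (algebraMap E Ω)) (hR : StrictMono (algebraMap E R))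
    {x : Ω} (hx : IsIntegral E x) (hxE : x ∉ Set.range (algebraMap E Ω))
    (hdΩ : ContainsRootsOfDegreeLT E Ω (minpoly E x).natDegree)
    (hdR : ContainsRootsOfDegreeLT E R (minpoly E x).natDegree) :
    ∃ y : R, Polynomial.aeval y (minpoly E x) = 0 ∧ SameCut E x y := by
  classical
  have hder : (minpoly E x).derivative ≠ 0 := fun h =>
    (minpoly.natDegree_pos hx).ne' (Polynomial.derivative_eq_zero.1 h)
  obtain ⟨a₀, b₀, hx₀⟩ := exists_mem_Ioo_of_isIntegral hΩ hx
  obtain ⟨a, b, hxab, hroots⟩ :=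
    exists_forall_notMem_Ioo hxE hx₀ (minpoly E x).derivative.roots.toFinset
  replace hroots (z : E) (hz : (minpoly E x).derivative.IsRoot z) :=
    hroots z (by simpa [hder] using hz)
  have hab : a < b := hΩ.lt_iff_lt.1 (hxab.1.trans hxab.2)
  obtain ⟨s, hs, hsx⟩ := hdΩ.exists_sign_eval_eq hΩ hder hroots hxab (minpoly.aeval E x)
  have hsa : SignType.sign ((minpoly E x).eval a) = -s := by
    rw [hsx a ⟨le_rfl, hab.le⟩, sign_neg (sub_neg.2 hxab.1), mul_neg_one]
  have hsb : SignType.sign ((minpoly E x).eval b) = s := by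
    rw [hsx b ⟨hab.le, le_rfl⟩, sign_pos (sub_pos.2 hxab.2), mul_one]
  obtain ⟨y, hyab, hy⟩ := HasPolynomialIVT.exists_isRoot_of_eval_mul_neg
    ((minpoly E x).map (algebraMap E R)) (hR hab) <| by
      rw [← sign_eq_neg_one_iff, sign_mul, Polynomial.eval_map_algebraMap,
        Polynomial.eval_map_algebraMap, sign_aeval_algebraMap hR, sign_aeval_algebraMap hR, hsa,
        hsb]
      exact (by decide : ∀ s : SignType, s ≠ 0 → -s * s = -1) s hs
  rw [Polynomial.IsRoot, Polynomial.eval_map_algebraMap] at hy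
  obtain ⟨s', -, hsy⟩ := hdR.exists_sign_eval_eq hR hder hroots hyab hy
  obtain rfl : s = s' := by
    rw [← hsb, hsy b ⟨hab.le, le_rfl⟩, sign_pos (sub_pos.2 hyab.2), mul_one]
  exact ⟨y, hy, sameCut_of_forall_mem_Icc hΩ hR hxab hyab fun e he =>
    mul_left_cancel₀ hs ((hsx e he).symm.trans (hsy e he))⟩

end SameCut

section Lifts

variable {k Ω R : Type*} [Field k] [Field Ω] [LinearOrder Ω] [IsStrictOrderedRing Ω] [Algebra k Ω]
  [Field R] [LinearOrder R] [IsStrictOrderedRing R] [Algebra k R]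

lemma exists_algHom_adjoin_strictMono {x : Ω} {y : R} (hx : IsIntegral k x)
    (h : ∀ g : Polynomial k,
      SignType.sign (Polynomial.aeval x g) = SignType.sign (Polynomial.aeval y g)) :
    ∃ φ : IntermediateField.adjoin k {x} →ₐ[k] R, StrictMono φ := by
  let pb := IntermediateField.adjoin.powerBasis hx
  have hgen (g : Polynomial k) : algebraMap _ Ω (Polynomial.aeval pb.gen g) =
      Polynomial.aeval x g := (Polynomial.aeval_algebraMap_apply Ω pb.gen g).symm
  have hy : Polynomial.aeval y (minpoly k pb.gen) = 0 := by
    rw [← sign_eq_zero_iff, ← h, sign_eq_zero_iff, ← hgen, minpoly.aeval, map_zero]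
  refine ⟨pb.lift y hy, (strictMono_iff_map_pos _).2 fun a ha => ?_⟩
  obtain ⟨g, rfl⟩ := pb.exists_eq_aeval' a
  rw [pb.lift_aeval, ← sign_eq_one_iff, ← h, sign_eq_one_iff, ← hgen]
  exact ha

lemma strictMono_emb_union {c : Set (IntermediateField.Lifts k Ω R)} (hc : IsChain (· ≤ ·) c)
    (hne : c.Nonempty) (hmono : ∀ σ ∈ c, StrictMono σ.emb) :
    StrictMono (IntermediateField.Lifts.union c hc).emb := by
  refine (strictMono_iff_map_pos _).2 fun a ha => ?_
  have : Nonempty c := hne.to_subtype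
  have hdir : Directed (· ≤ ·) fun σ : c => σ.1.carrier :=
    hc.directedOn.directed_val.mono_comp _ fun _ _ h => h.1
  obtain ⟨σ, hσ⟩ : ∃ σ : c, (a : Ω) ∈ σ.1.carrier := by
    have ha' := (IntermediateField.Lifts.carrier_union c hc).le a.2
    rwa [← SetLike.mem_coe,
      IntermediateField.coe_iSup_of_directed hdir, Set.mem_iUnion] at ha'
  have hext := (IntermediateField.Lifts.le_union c hc σ.2).2 ⟨a, hσ⟩
  exact ((strictMono_iff_map_pos _).1 (hmono σ σ.2) ⟨a, hσ⟩ ha).trans_eq hext.symm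

lemma strictMono_emb_bot (h : ∀ a : k, 0 < algebraMap k Ω a → 0 < algebraMap k R a) :
    StrictMono (⊥ : IntermediateField.Lifts k Ω R).emb := by
  refine (strictMono_iff_map_pos _).2 fun a ha => ?_
  obtain ⟨b, hb⟩ := IntermediateField.mem_bot.1 a.2
  obtain rfl : algebraMap k _ b = a := Subtype.ext hb
  rw [AlgHom.commutes]
  exact h b ha

end Lifts

section Extension

variable {E Ω R : Type*} [Field E] [LinearOrder E] [IsStrictOrderedRing E]
  [Field Ω] [LinearOrder Ω] [IsStrictOrderedRing Ω] [HasPolynomialIVT Ω] [Algebra E Ω]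
  [Field R] [LinearOrder R] [IsStrictOrderedRing R] [HasPolynomialIVT R] [Algebra E R]

theorem exists_forall_sign_aeval_eq_of_minimal (hΩ : StrictMono (algebraMap E Ω))
    (hR : StrictMono (algebraMap E R)) {x : Ω} (hx : IsIntegral E x)
    (hxE : x ∉ Set.range (algebraMap E Ω))
    (hdΩ : ContainsRootsOfDegreeLT E Ω (minpoly E x).natDegree)
    (hdR : ContainsRootsOfDegreeLT E R (minpoly E x).natDegree) :
    ∃ y : R, y ∉ Set.range (algebraMap E R) ∧ ∀ g : Polynomial E,
      SignType.sign (Polynomial.aeval x g) = SignType.sign (Polynomial.aeval y g) := by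
  obtain ⟨y, hy, hxy⟩ := exists_sameCut hΩ hR hx hxE hdΩ hdR
  refine ⟨y, hxy.notMem_range hxE, fun g => ?_⟩
  have hdeg := Polynomial.natDegree_modByMonic_lt g (minpoly.monic hx) (minpoly.ne_one E x)
  rw [← Polynomial.aeval_modByMonic_eq_self_of_root (minpoly.aeval E x),
    ← Polynomial.aeval_modByMonic_eq_self_of_root hy]
  exact hxy.sign_aeval_eq hΩ hR hxE hdΩ hdR hdeg

/-- The minimality required of the degree concerns both `Ω` and `R`, and it may be attained by an
element of `R` only, whence the symmetric treatment of the two fields. -/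
theorem exists_forall_sign_aeval_eq [Algebra.IsAlgebraic E Ω] (hΩ : StrictMono (algebraMap E Ω))
    (hR : StrictMono (algebraMap E R)) {x₀ : Ω} (hx₀ : x₀ ∉ Set.range (algebraMap E Ω)) :
    ∃ x : Ω, x ∉ Set.range (algebraMap E Ω) ∧ ∃ y : R, ∀ g : Polynomial E,
      SignType.sign (Polynomial.aeval x g) = SignType.sign (Polynomial.aeval y g) := by
  classical
  have hex : ∃ d, ¬ (ContainsRootsOfDegreeLT E Ω d ∧ ContainsRootsOfDegreeLT E R d) :=
    ⟨_, fun h => hx₀ (h.1 x₀ (Algebra.IsIntegral.isIntegral x₀) (Nat.lt_succ_self _))⟩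
  obtain ⟨d, hd, hmin⟩ : ∃ d, ¬ (ContainsRootsOfDegreeLT E Ω d ∧ ContainsRootsOfDegreeLT E R d) ∧
      ∀ m < d, ContainsRootsOfDegreeLT E Ω m ∧ ContainsRootsOfDegreeLT E R m :=
    ⟨Nat.find hex, Nat.find_spec hex, fun m hm => not_not.1 (Nat.find_min hex hm)⟩
  simp only [ContainsRootsOfDegreeLT, not_and_or, not_forall] at hd
  rcases hd with ⟨x, hx, hdeg, hxE⟩ | ⟨y, hy, hdeg, hyE⟩
  · obtain ⟨y, -, hxy⟩ :=
      exists_forall_sign_aeval_eq_of_minimal hΩ hR hx hxE (hmin _ hdeg).1 (hmin _ hdeg).2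
    exact ⟨x, hxE, y, hxy⟩
  · obtain ⟨x, hxE, hxy⟩ :=
      exists_forall_sign_aeval_eq_of_minimal hR hΩ hy hyE (hmin _ hdeg).2 (hmin _ hdeg).1
    exact ⟨x, hxE, y, fun g => (hxy g).symm⟩

theorem exists_algHom_strictMono {k : Type*} [Field k] [Algebra k Ω] [Algebra k R]
    [Algebra.IsAlgebraic k Ω] (h : ∀ a : k, 0 < algebraMap k Ω a → 0 < algebraMap k R a) :
    ∃ ψ : Ω →ₐ[k] R, StrictMono ψ := by
  obtain ⟨σ, -, hσ⟩ := zorn_le_nonempty₀ {σ : IntermediateField.Lifts k Ω R | StrictMono σ.emb}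
    (fun c hc hchain τ hτ => ⟨_, strictMono_emb_union hchain ⟨τ, hτ⟩ hc,
      IntermediateField.Lifts.le_union c hchain⟩) ⊥
    (strictMono_emb_bot h)
  suffices htop : σ.carrier = ⊤ by
    let e := ((IntermediateField.equivOfEq htop).trans IntermediateField.topEquiv).symm
    exact ⟨σ.emb.comp e, hσ.prop.comp fun a b hab => hab⟩
  by_contra! hne
  obtain ⟨x₀, -, hx₀⟩ := SetLike.exists_of_lt hne.lt_top
  let _ : Algebra σ.carrier R := σ.emb.toAlgebra
  have := Algebra.IsAlgebraic.tower_top (K := k) (A := Ω) σ.carrier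
  obtain ⟨x, hx, y, hxy⟩ := exists_forall_sign_aeval_eq (E := σ.carrier) (Ω := Ω) (R := R)
    (fun a b hab => hab) hσ.prop (x₀ := x₀) fun ⟨a, ha⟩ => hx₀ (ha ▸ a.2)
  obtain ⟨φ, hφ⟩ := exists_algHom_adjoin_strictMono (Algebra.IsIntegral.isIntegral x) hxy
  let τ : IntermediateField.Lifts k Ω R :=
    ⟨(IntermediateField.adjoin σ.carrier {x}).restrictScalars k, φ.restrictScalars k⟩
  have hστ : σ ≤ τ := ⟨fun a ha =>
    (IntermediateField.adjoin σ.carrier {x}).algebraMap_mem ⟨a, ha⟩, fun a => φ.commutes a⟩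
  have := hσ.le_of_ge (y := τ) hφ hστ
  exact hx ⟨⟨x, this.1 (IntermediateField.mem_adjoin_simple_self σ.carrier x)⟩, rfl⟩

end Extension

section CutFilter

variable {S Ω : Type*} [Field S] [LinearOrder S] [Field Ω] [LinearOrder Ω] [Algebra S Ω]

/-- The filter of points of `S` approaching the cut that `x` determines in `S`. -/
def cutFilter (S : Type*) {Ω : Type*} [Field S] [LinearOrder S] [Field Ω] [LinearOrder Ω]
    [Algebra S Ω] (x : Ω) : Filter S :=
  ⨅ z : S, Filter.principal {t | z ≠ t ∧ (z < t ↔ algebraMap S Ω z < x)}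

lemma eventually_cutFilter_forall_mem {x : Ω} (Z : Finset S) :
    ∀ᶠ t in cutFilter S x, ∀ z ∈ Z, z ≠ t ∧ (z < t ↔ algebraMap S Ω z < x) :=
  (Filter.eventually_all_finset Z).2 fun z _ =>
    Filter.mem_iInf_of_mem z (Filter.mem_principal_self _)

variable [IsStrictOrderedRing S]

lemma cutFilter_neBot (hΩ : StrictMono (algebraMap S Ω)) {x : Ω}
    (hx : x ∉ Set.range (algebraMap S Ω)) : (cutFilter S x).NeBot := by
  refine (Filter.hasBasis_iInf_principal_finite _).neBot_iff.2 fun {I} hI => ?_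
  obtain ⟨t, ht⟩ := exists_forall_lt_iff_lt hΩ hx hI.toFinset
  exact ⟨t, Set.mem_iInter₂.2 fun z hz => ht z (hI.mem_toFinset.2 hz)⟩

variable [IsStrictOrderedRing Ω] [HasPolynomialIVT S] [HasPolynomialIVT Ω]

lemma mem_range_of_isIntegral (hΩ : StrictMono (algebraMap S Ω)) {x : Ω} (hx : IsIntegral S x) :
    x ∈ Set.range (algebraMap S Ω) := by
  induction hd : (minpoly S x).natDegree using Nat.strong_induction_on generalizing x with
  | _ d ih =>
  by_contra hxS
  obtain ⟨y, -, hxy⟩ := exists_sameCut (R := S) hΩ strictMono_id hx hxS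
    (fun z hz hzd => ih _ (hd ▸ hzd) hz rfl) (fun z _ _ => ⟨z, rfl⟩)
  exact hxy.notMem_range hxS ⟨y, rfl⟩

lemma eventually_cutFilter_sign_eval_eq (hΩ : StrictMono (algebraMap S Ω)) {x : Ω}
    (hx : x ∉ Set.range (algebraMap S Ω)) (g : Polynomial S) :
    ∀ᶠ t in cutFilter S x, SignType.sign (g.eval t) = SignType.sign (Polynomial.aeval x g) := by
  classical
  rcases eq_or_ne g 0 with rfl | hg
  · simp
  filter_upwards [eventually_cutFilter_forall_mem g.roots.toFinset] with t ht
  exact (sign_aeval_eq_sign_eval hΩ hx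
    (fun z hz => mem_range_of_isIntegral hΩ (IsAlgebraic.isIntegral ⟨g, hg, hz⟩))
    fun z hz => ht z (by simpa [hg] using hz)).symm

end CutFilter

section Germ

lemma exists_eval_neg_of_germ {α σ S : Type*} [CommSemiring S] [Preorder S] {U : Ultrafilter α}
    {f : MvPolynomial σ S} {y : σ → Filter.Germ (U : Filter α) S}
    (h : eval₂ ((Filter.Germ.coeRingHom (U : Filter α)).comp (Pi.constRingHom α S)) y f < 0) :
    ∃ a : σ → S, eval a f < 0 := by
  choose u hu using fun i => Quotient.exists_rep (y i)
  obtain rfl : (fun i => Filter.Germ.coeRingHom (U : Filter α) (u i)) = y := funext hu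
  rw [← hom_eval₂] at h
  obtain ⟨t, ht⟩ := (Filter.Germ.coe_lt.1 h).exists
  refine ⟨fun i => u i t, lt_of_eq_of_lt ?_ ht⟩
  exact (hom_eval₂ f (Pi.constRingHom α S) (Pi.evalRingHom (fun _ => S) t) u).symm

lemma sign_germ_eq {α S : Type*} [LinearOrder S] [Zero S] {U : Ultrafilter α} {f : α → S}
    {s : SignType} (h : ∀ᶠ t in U, SignType.sign (f t) = s) :
    SignType.sign (f : Filter.Germ (U : Filter α) S) = s := by
  cases s with
  | zero => exact sign_eq_zero_iff.2 (Filter.Germ.coe_eq.2 (h.mono fun t => sign_eq_zero_iff.1))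
  | neg =>
    exact sign_eq_neg_one_iff.2 (Filter.Germ.coe_lt.2 (h.mono fun t => sign_eq_neg_one_iff.1))
  | pos => exact sign_eq_one_iff.2 (Filter.Germ.coe_lt.2 (h.mono fun t => sign_eq_one_iff.1))

end Germ

section Transfer

lemma exists_ringHom_adjoin_forall_pos {S Ω R : Type*} [Field S] [Field Ω] [LinearOrder Ω]
    [IsStrictOrderedRing Ω] [Algebra S Ω] [Field R] [LinearOrder R] [IsStrictOrderedRing R]
    {x : Ω} (hx : Transcendental S x) {φ : Polynomial S →+* R}
    (hφ : ∀ g, SignType.sign (φ g) = SignType.sign (Polynomial.aeval x g)) :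
    ∃ ψ : IntermediateField.adjoin S {x} →+* R,
      (∀ g, ψ (Polynomial.aeval (IntermediateField.AdjoinSimple.gen S x) g) = φ g) ∧
        ∀ a, 0 < a → 0 < ψ a := by
  have hinj : Function.Injective φ := by
    refine (injective_iff_map_eq_zero φ).2 fun g hg => ?_
    rw [← sign_eq_zero_iff, hφ, sign_eq_zero_iff] at hg
    exact (transcendental_iff.1 hx) g hg
  let e := RatFunc.algEquivOfTranscendental x hx
  let ψ : IntermediateField.adjoin S {x} →+* R :=
    (IsFractionRing.lift hinj : RatFunc S →+* R).comp e.symm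
  have hψ (g : Polynomial S) :
      ψ (Polynomial.aeval (IntermediateField.AdjoinSimple.gen S x) g) = φ g := by
    simp [ψ, e]
  refine ⟨ψ, hψ, fun a ha => ?_⟩
  obtain ⟨p, q, hpq⟩ := (IntermediateField.mem_adjoin_simple_iff S _).1 a.2
  obtain rfl : a = Polynomial.aeval (IntermediateField.AdjoinSimple.gen S x) p /
      Polynomial.aeval (IntermediateField.AdjoinSimple.gen S x) q :=
    Subtype.ext (by simpa using hpq)
  have ha' : 0 < Polynomial.aeval x p / Polynomial.aeval x q := hpq ▸ ha
  rw [map_div₀, hψ, hψ]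
  rw [div_pos_iff] at ha' ⊢
  simpa only [← sign_eq_one_iff, ← sign_eq_neg_one_iff, hφ] using ha'

variable {S Ω : Type*} [Field S] [LinearOrder S] [IsStrictOrderedRing S] [HasPolynomialIVT S]
  [Field Ω] [LinearOrder Ω] [IsStrictOrderedRing Ω] [HasPolynomialIVT Ω] [Algebra S Ω]

theorem exists_intermediateField_germ_strictMono (hΩ : StrictMono (algebraMap S Ω)) {x : Ω}
    (hx : x ∉ Set.range (algebraMap S Ω)) :
    ∃ K : IntermediateField S Ω, x ∈ K ∧ HasPolynomialIVT K ∧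
      ∃ (U : Ultrafilter S) (ψ : K →+* Filter.Germ (U : Filter S) S), StrictMono ψ ∧
        ψ.comp (algebraMap S K) =
          (Filter.Germ.coeRingHom (U : Filter S)).comp (Pi.constRingHom S S) := by
  have := cutFilter_neBot hΩ hx
  let U := Ultrafilter.of (cutFilter S x)
  let φ : Polynomial S →+* Filter.Germ (U : Filter S) S :=
    (Filter.Germ.coeRingHom (U : Filter S)).comp (RingHom.pi Polynomial.evalRingHom)
  obtain ⟨ψ₀, hψ₀, hpos⟩ := exists_ringHom_adjoin_forall_pos (x := x) (φ := φ)
    (fun h => hx (mem_range_of_isIntegral hΩ h.isIntegral))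
    fun g => sign_germ_eq (Ultrafilter.of_le _ (eventually_cutFilter_sign_eval_eq hΩ hx g))
  let k := IntermediateField.adjoin S {x}
  let _ : Algebra k (Filter.Germ (U : Filter S) S) := ψ₀.toAlgebra
  obtain ⟨ψ, hψ⟩ := exists_algHom_strictMono (k := k) (Ω := algebraicClosure k Ω)
    (R := Filter.Germ (U : Filter S) S) fun a ha => hpos a ha
  have hψS (s : S) : ψ (algebraMap k _ (algebraMap S k s)) = φ (Polynomial.C s) := by
    rw [ψ.commutes, ← hψ₀, Polynomial.aeval_C]
    rfl
  refine ⟨(algebraicClosure k Ω).restrictScalars S,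
    (algebraicClosure k Ω).algebraMap_mem (IntermediateField.AdjoinSimple.gen S x),
    inferInstanceAs (HasPolynomialIVT (algebraicClosure k Ω)), U,
    (ψ : algebraicClosure k Ω →+* Filter.Germ (U : Filter S) S), hψ,
    RingHom.ext fun s => (hψS s).trans ?_⟩
  exact congrArg (fun f : S → S => (f : Filter.Germ (U : Filter S) S))
    (funext fun t => Polynomial.eval_C)

/-- The partial evaluation `f(t, X₁, …, Xₙ)`, which lowers the number of variables in the transfer
argument. The coefficients are extended to the algebra `K` containing `t`. -/
def substHead {S K : Type*} [CommSemiring S] [CommSemiring K] [Algebra S K] {n : ℕ} (t : K)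
    (f : MvPolynomial (Fin (n + 1)) S) : MvPolynomial (Fin n) K :=
  aeval (Fin.cons (C t) X) f

lemma aeval_substHead {S K A : Type*} [CommSemiring S] [CommSemiring K] [CommSemiring A]
    [Algebra S K] [Algebra K A] [Algebra S A] [IsScalarTower S K A] {n : ℕ} (t : K)
    (f : MvPolynomial (Fin (n + 1)) S) (b : Fin n → A) :
    aeval b (substHead t f) = aeval (Fin.cons (algebraMap K A t) b : Fin (n + 1) → A) f := by
  let φ : MvPolynomial (Fin n) K →ₐ[S] A := (aeval b).restrictScalars S
  refine (comp_aeval_apply _ φ f).trans ?_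
  congr 2
  funext i
  cases i using Fin.cases <;> simp [φ]

/-- The Artin–Lang transfer for one strict inequality, by specialising one coordinate at a time. -/
theorem exists_eval_neg_of_aeval_neg.{u} {n : ℕ} {S Ω : Type u}
    [Field S] [LinearOrder S] [IsStrictOrderedRing S] [HasPolynomialIVT S]
    [Field Ω] [LinearOrder Ω] [IsStrictOrderedRing Ω] [HasPolynomialIVT Ω] [Algebra S Ω]
    (hΩ : StrictMono (algebraMap S Ω)) {f : MvPolynomial (Fin n) S} {x : Fin n → Ω}
    (hf : aeval x f < 0) : ∃ a : Fin n → S, eval a f < 0 := by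
  induction n generalizing S Ω with
  | zero =>
    obtain ⟨c, rfl⟩ := C_surjective (Fin 0) f
    refine ⟨Fin.elim0, ?_⟩
    rw [aeval_C, ← map_zero (algebraMap S Ω), hΩ.lt_iff_lt] at hf
    rwa [eval_C]
  | succ n ih =>
    rw [← Fin.cons_self_tail x] at hf
    by_cases hx : x 0 ∈ Set.range (algebraMap S Ω)
    · obtain ⟨t, ht⟩ := hx
      rw [← ht, ← aeval_substHead] at hf
      obtain ⟨b, hb⟩ := ih hΩ hf
      rw [← aeval_eq_eval, aeval_substHead] at hb
      exact ⟨_, hb⟩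
    · obtain ⟨K, hxK, _, U, ψ, hψ, hψS⟩ := exists_intermediateField_germ_strictMono hΩ hx
      have hx0 : x 0 = algebraMap K Ω ⟨x 0, hxK⟩ := rfl
      rw [hx0, ← aeval_substHead] at hf
      obtain ⟨b, hb⟩ := ih (S := K) (Ω := Ω) (fun _ _ h => h) hf
      rw [← aeval_eq_eval, aeval_substHead] at hb
      have hψb := hψ hb
      rw [map_zero, aeval_def, hom_eval₂, hψS] at hψb
      exact exists_eval_neg_of_germ hψb

end Transfer

section Hilbert17

variable {σ : Type*}

lemma eq_zero_of_forall_mem_isOpen_eval_eq_zero {O : Set (σ → ℝ)} (hO : IsOpen O) {a : σ → ℝ}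
    (ha : a ∈ O) {h : MvPolynomial σ ℝ} (hh : ∀ b ∈ O, eval b h = 0) : h = 0 := by
  obtain ⟨I, u, hu, hIu⟩ := isOpen_pi_iff.1 hO a ha
  refine MvPolynomial.funext_set (fun i => {y | i ∈ I → y ∈ u i}) (fun i => ?_) fun b hb => ?_
  · by_cases hi : i ∈ I
    · simpa [hi] using infinite_of_mem_nhds (a i) ((hu i hi).1.mem_nhds (hu i hi).2)
    · simpa [hi] using Set.infinite_univ
  · rw [hh b (hIu fun i hi => hb i trivial hi), map_zero]

lemma exists_isSumSq_mul_self_mul_of_isSumSq {A K : Type*} [CommRing A] [IsDomain A] [Field K]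
    [Algebra A K] [IsFractionRing A K] {z : K} (hz : IsSumSq z) :
    ∃ h τ : A, h ≠ 0 ∧ IsSumSq τ ∧ algebraMap A K τ = algebraMap A K (h * h) * z := by
  induction hz with
  | zero => exact ⟨1, 0, one_ne_zero, IsSumSq.zero, by simp⟩
  | sq_add b _ ih =>
    obtain ⟨h, τ, hh, hτ, hhτ⟩ := ih
    obtain ⟨p, q, hq, rfl⟩ := IsFractionRing.div_surjective (A := A) b
    have hq0 : q ≠ 0 := nonZeroDivisors.ne_zero hq
    have hqK : algebraMap A K q ≠ 0 := by simpa using hq0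
    refine ⟨h * q, (h * p) * (h * p) + (q * q) * τ, mul_ne_zero hh hq0,
      IsSumSq.sq_add _ ((IsSumSq.mul_self q).mul hτ), ?_⟩
    simp only [map_add, map_mul] at hhτ ⊢
    rw [hhτ]
    field_simp

/-- If `h ^ 2 * g` is a sum of squares of polynomials, then `h` vanishes where `g` is negative. -/
theorem eval_nonneg_of_isSumSq_algebraMap {g : MvPolynomial σ ℝ}
    (hg : IsSumSq (algebraMap _ (FractionRing (MvPolynomial σ ℝ)) g)) (a : σ → ℝ) :
    0 ≤ eval a g := by
  obtain ⟨h, τ, hh, hτ, hhτ⟩ := exists_isSumSq_mul_self_mul_of_isSumSq (A := MvPolynomial σ ℝ) hg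
  rw [← map_mul] at hhτ
  obtain rfl : τ = h * h * g := IsFractionRing.injective _ _ hhτ
  by_contra! hneg
  refine hh (eq_zero_of_forall_mem_isOpen_eval_eq_zero (O := {b | eval b g < 0})
    (isOpen_lt (MvPolynomial.continuous_eval g) continuous_const) hneg fun b hb => ?_)
  have hb' : 0 ≤ eval b h * eval b h * eval b g := by
    simpa using (isSumSq_map (eval b) hτ).nonneg
  by_contra hne
  exact hb'.not_gt (mul_neg_of_pos_of_neg (mul_self_pos.2 hne) hb)

lemma exists_eval_neg_of_not_isSumSq_algebraMap_fin {n : ℕ} {p : MvPolynomial (Fin n) ℝ}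
    (hp : ¬ IsSumSq (algebraMap _ (FractionRing (MvPolynomial (Fin n) ℝ)) p)) :
    ∃ a : Fin n → ℝ, eval a p < 0 := by
  have : CharZero (FractionRing (MvPolynomial (Fin n) ℝ)) :=
    charZero_of_injective_algebraMap (algebraMap ℝ _).injective
  obtain ⟨Ω, _, _, _, _, ι, hι⟩ := exists_hasPolynomialIVT_neg _ hp
  let κ : MvPolynomial (Fin n) ℝ →+* Ω := ι.comp (algebraMap _ _)
  let _ : Algebra ℝ Ω := (κ.comp C).toAlgebra
  have hΩ : StrictMono (algebraMap ℝ Ω) :=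
    (ringHom_monotone (fun _ => Real.isSquare_iff.2) _).strictMono_of_injective
      (algebraMap ℝ Ω).injective
  refine exists_eval_neg_of_aeval_neg hΩ (x := fun i => κ (X i)) ?_
  have hκ : aeval (fun i => κ (X i)) p = κ p := by
    rw [aeval_def, RingHom.algebraMap_toAlgebra, ← hom_eval₂, eval₂_eta]
  rwa [hκ]

/-- Artin's solution of Hilbert's 17th problem. -/
theorem exists_eval_neg_of_not_isSumSq_algebraMap {p : MvPolynomial σ ℝ}
    (hp : ¬ IsSumSq (algebraMap _ (FractionRing (MvPolynomial σ ℝ)) p)) :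
    ∃ a : σ → ℝ, eval a p < 0 := by
  obtain ⟨n, f, hf, q, rfl⟩ := exists_fin_rename p
  let φ : FractionRing (MvPolynomial (Fin n) ℝ) →+* FractionRing (MvPolynomial σ ℝ) :=
    IsFractionRing.map (j := (rename f : _ →ₐ[ℝ] _).toRingHom) (rename_injective f hf)
  have hφ : φ (algebraMap _ _ q) = algebraMap _ _ (rename f q) := IsLocalization.map_eq _ q
  obtain ⟨a, ha⟩ := exists_eval_neg_of_not_isSumSq_algebraMap_fin (p := q)
    fun h => hp (hφ ▸ isSumSq_map φ h)
  refine ⟨Function.extend f a 0, ?_⟩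
  rwa [eval_rename, Function.extend_comp hf]

end Hilbert17

section Closedness

lemma isOpen_weakTop_neg {V : Type*} [AddCommGroup V] [Module ℝ V] (L : V →ₗ[ℝ] ℝ) :
    @IsOpen _ (weakTop V) {v | L v < 0} := by
  let := weakTop V
  have hL : Continuous L := continuous_iff_le_induced.2 (iInf_le _ L)
  exact isOpen_lt hL continuous_const

lemma isClosed_finTop_of_forall_separated {E : Type*} [AddCommGroup E] [Module ℝ E] {C : Set E}
    (h : ∀ U : Submodule ℝ E, FiniteDimensional ℝ U → ∀ x : U, (x : E) ∉ C →
      ∃ L : U →ₗ[ℝ] ℝ, (∀ u : U, (u : E) ∈ C → 0 ≤ L u) ∧ L x < 0) :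
    @IsClosed _ (finTop E) C := by
  refine (@isOpen_compl_iff _ _ (finTop E)).1 fun U hU => ?_
  let := weakTop U
  refine isOpen_iff_forall_mem_open.2 fun x hx => ?_
  obtain ⟨L, hLC, hLx⟩ := h U hU x hx
  exact ⟨{u | L u < 0}, fun u hu huC => (hLC u huC).not_gt hu, isOpen_weakTop_neg L, hLx⟩

lemma exists_common_denominator {k A K : Type*} [Field k] [CommRing A] [IsDomain A] [Algebra k A]
    [Field K] [Algebra A K] [IsFractionRing A K] [Algebra k K] [IsScalarTower k A K]
    (U : Submodule k K) [FiniteDimensional k U] :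
    ∃ q : A, q ≠ 0 ∧ ∀ u ∈ U, ∃ p : A, algebraMap A K p = algebraMap A K q * u := by
  obtain ⟨s, rfl⟩ := (Submodule.fg_iff_finiteDimensional U).2 inferInstance
  obtain ⟨q, hq⟩ := IsLocalization.exist_integer_multiples_of_finset (nonZeroDivisors A) s
  refine ⟨q, nonZeroDivisors.ne_zero q.2, fun u hu => ?_⟩
  suffices h : Submodule.span k s ≤
      (LinearMap.range (IsScalarTower.toAlgHom k A K).toLinearMap).comap
        (LinearMap.mulLeft k (algebraMap A K q)) from h hu
  refine Submodule.span_le.2 fun x hx => ?_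
  obtain ⟨p, hp⟩ := hq x hx
  exact ⟨p, hp.trans (Algebra.smul_def _ _)⟩

/-- For a common denominator `q` of `U`, the functional is `u ↦ (q ^ 2 * u)(a)`, where `a` is a
point at which the polynomial `q ^ 2 * x` is negative. -/
theorem exists_linearMap_nonneg_of_isSumSq_neg {σ : Type*}
    (U : Submodule ℝ (FractionRing (MvPolynomial σ ℝ))) [FiniteDimensional ℝ U] {x : U}
    (hx : ¬ IsSumSq (x : FractionRing (MvPolynomial σ ℝ))) :
    ∃ L : U →ₗ[ℝ] ℝ,
      (∀ u : U, IsSumSq (u : FractionRing (MvPolynomial σ ℝ)) → 0 ≤ L u) ∧ L x < 0 := by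
  let P := MvPolynomial σ ℝ
  let F := FractionRing P
  obtain ⟨q, hq0, hq⟩ := exists_common_denominator (A := P) U
  let c : F := algebraMap P F q
  have hc : c ≠ 0 := by simpa [c] using hq0
  have hqsq (u : U) : ∃ p : P, algebraMap P F p = c * c * u := by
    obtain ⟨p, hp⟩ := hq u u.2
    exact ⟨q * p, by rw [map_mul, hp, mul_assoc]⟩
  obtain ⟨l, hl⟩ := LinearMap.exists_leftInverse_of_injective
    (IsScalarTower.toAlgHom ℝ P F).toLinearMap
    (LinearMap.ker_eq_bot.2 (IsFractionRing.injective P F))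
  obtain ⟨p, hp⟩ := hqsq x
  have hpF : ¬ IsSumSq (algebraMap P F p) := fun h => hx <| by
    rw [eq_div_of_mul_eq (mul_ne_zero hc hc) ((mul_comm _ _).trans hp.symm)]
    exact isSumSq_div h (IsSumSq.mul_self c)
  obtain ⟨a, ha⟩ := exists_eval_neg_of_not_isSumSq_algebraMap hpF
  let L : U →ₗ[ℝ] ℝ :=
    (aeval a : P →ₐ[ℝ] ℝ).toLinearMap ∘ₗ l ∘ₗ LinearMap.mulLeft ℝ (c * c) ∘ₗ U.subtype
  have hL {u : U} {g : P} (hg : algebraMap P F g = c * c * u) : L u = eval a g :=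
    congrArg (aeval a) ((congrArg l hg.symm).trans (LinearMap.congr_fun hl g))
  refine ⟨L, fun u hu => ?_, (hL hp).trans_lt ha⟩
  obtain ⟨g, hg⟩ := hqsq u
  rw [hL hg]
  refine eval_nonneg_of_isSumSq_algebraMap ?_ a
  rw [hg]
  exact (IsSumSq.mul_self c).mul hu

theorem sumsOfSquares_isClosed_finTop_general {σ : Type*} :
    @IsClosed _ (finTop (FractionRing (MvPolynomial σ ℝ)))
      {f : FractionRing (MvPolynomial σ ℝ) | IsSumSq f} :=
  isClosed_finTop_of_forall_separated fun U _ _ hx => exists_linearMap_nonneg_of_isSumSq_neg U hx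

end Closedness

/-- The set of sums of squares of `ℝ(X₁,…,Xₙ)` is closed in the
topology of finitely open sets. -/
theorem sumsOfSquares_isClosed_finTop (n : ℕ) :
    @IsClosed _ (finTop (FractionRing (MvPolynomial (Fin n) ℝ)))
      {σ : FractionRing (MvPolynomial (Fin n) ℝ) | IsSumSq σ} :=
  sumsOfSquares_isClosed_finTop_general

end
end

section
/- For any preordering T on any commutative unital ℝ-algebra E, the closure of T in the finest locally convex topology on E is again a preordering; that is, the set of elements x ∈ E such that L(x) ≥ 0 for every linear functional L on E with L(T) ⊆ [0,∞) is closed under addition and multiplication and contains all squares of E. -/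
open MvPolynomial MeasureTheory

noncomputable section

/-!
Every linear map is continuous for the finest locally convex topology, so multiplication is
separately continuous. Hence `t * closure T ⊆ closure T` for `t ∈ T`; fixing instead the right
factor `y ∈ closure T`, the linear map `x ↦ x * y` sends `T`, and therefore also `closure T`, into
the closed set `closure T`.
-/

section DualClosure

variable {E F G : Type*} [AddCommGroup E] [Module ℝ E] [AddCommGroup F] [Module ℝ F]
  [AddCommGroup G] [Module ℝ G]

theorem subset_dualClosure (C : Set E) : C ⊆ dualClosure C :=
  fun _ hc _ hL => hL _ hc

theorem add_mem_dualClosure {C : Set E} {x y : E} (hx : x ∈ dualClosure C)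
    (hy : y ∈ dualClosure C) : x + y ∈ dualClosure C := fun L hL => by
  rw [map_add]
  exact add_nonneg (hx L hL) (hy L hL)

theorem mapsTo_dualClosure {A : Set E} {C : Set F} {f : E →ₗ[ℝ] F}
    (hf : Set.MapsTo f A (dualClosure C)) : Set.MapsTo f (dualClosure A) (dualClosure C) :=
  fun _ hx L hL => hx (L ∘ₗ f) fun _ ha => hf ha L hL

theorem map₂_mem_dualClosure {A : Set E} {B : Set F} {C : Set G} (f : E →ₗ[ℝ] F →ₗ[ℝ] G)
    (hf : ∀ a ∈ A, ∀ b ∈ B, f a b ∈ C) {x : E} (hx : x ∈ dualClosure A) {y : F}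
    (hy : y ∈ dualClosure B) : f x y ∈ dualClosure C := by
  have apply_mem : ∀ a ∈ A, f a y ∈ dualClosure C := fun a ha =>
    mapsTo_dualClosure (fun b hb => subset_dualClosure C (hf a ha b hb)) hy
  exact mapsTo_dualClosure (f := f.flip y) apply_mem hx

end DualClosure

theorem dualClosure_preordering_is_preordering_general
    {E : Type*} [NonUnitalNonAssocRing E] [Module ℝ E] [SMulCommClass ℝ E E]
    [IsScalarTower ℝ E E] (T : Set E)
    (hsq : ∀ a : E, a * a ∈ T)
    (hmul : ∀ a ∈ T, ∀ b ∈ T, a * b ∈ T) :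
    (∀ a : E, a * a ∈ dualClosure T) ∧
    (∀ a ∈ dualClosure T, ∀ b ∈ dualClosure T, a + b ∈ dualClosure T) ∧
    (∀ a ∈ dualClosure T, ∀ b ∈ dualClosure T, a * b ∈ dualClosure T) :=
  ⟨fun a => subset_dualClosure T (hsq a),
    fun _ ha _ hb => add_mem_dualClosure ha hb,
    fun _ ha _ hb => map₂_mem_dualClosure (LinearMap.mul ℝ E) hmul ha hb⟩

/-- The closure of a preordering in the finest locally convex topology
(described dually: all `x` with `L x ≥ 0` for every linear functional `L` nonnegative on
`T`) is again a preordering. -/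
theorem dualClosure_preordering_is_preordering
    {E : Type*} [CommRing E] [Algebra ℝ E] (T : Set E)
    (hsq : ∀ a : E, a ^ 2 ∈ T)
    (hadd : ∀ a ∈ T, ∀ b ∈ T, a + b ∈ T)
    (hmul : ∀ a ∈ T, ∀ b ∈ T, a * b ∈ T) :
    (∀ a : E, a ^ 2 ∈ dualClosure T) ∧
    (∀ a ∈ dualClosure T, ∀ b ∈ dualClosure T, a + b ∈ dualClosure T) ∧
    (∀ a ∈ dualClosure T, ∀ b ∈ dualClosure T, a * b ∈ dualClosure T) := by
  simp only [sq] at hsq ⊢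
  exact dualClosure_preordering_is_preordering_general T hsq hmul

end
end

section
/- Let D ⊆ ℝ[X₁,…,Xₙ]\{0} be a multiplicatively closed set with 1 ∈ D and E = D⁻¹ℝ[X₁,…,Xₙ]. Let 𝒳 ⊆ ℝⁿ be such that 𝒳 \ Z(d) is dense in 𝒳 for every d ∈ D. Then for every R ∈ E the following are equivalent: (1) R ⪰ 0 on 𝒳, i.e. there exist f ∈ ℝ[X₁,…,Xₙ] and d ∈ D with R = f/d and f·d ≥ 0 on 𝒳; (2) for every representation R = f/d with f ∈ ℝ[X₁,…,Xₙ] and d ∈ D, the polynomial f·d is nonnegative on 𝒳; (3) writing R = a/b in ℝ(X₁,…,Xₙ) with a,b ∈ ℝ[X₁,…,Xₙ], b ≠ 0 and gcd(a,b) = 1, the polynomial a·b is nonnegative on 𝒳. In particular, for all f ∈ ℝ[X₁,…,Xₙ], the image f/1 ∈ E satisfies f/1 ⪰ 0 on 𝒳 if and only if f ≥ 0 on 𝒳. -/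
/-!
If `b · (f/d) = a` in `D⁻¹A`, then `u b f = u a d` for some `u ∈ D`, so that
`a b · (d u)² = f d · (b u)²`. Hence `f d ≥ 0` on `X` forces `a b ≥ 0` wherever `d u ∈ D` does not
vanish, and by density and continuity on all of `X`. This covers both another representation
`a/b` with `b ∈ D` and the reduced one. Conversely, if `f = a c` and `d = b c` with `a`, `b`
coprime, then `f d = a b · c²`.
-/

open MvPolynomial MeasureTheory

noncomputable section

/-- The preordering generated by `g 1, …, g m` in a commutative ring: all finite sums
of elements `σ • g₁^ν₁ ⋯ g_m^ν_m` with `σ` a sum of squares and `ν ∈ {0,1}^m`. -/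
def genPreordering {E : Type*} [CommRing E] {m : ℕ} (g : Fin m → E) : Set E :=
  {x | ∃ σ : (Fin m → Bool) → E, (∀ ν, IsSumSq (σ ν)) ∧
    x = ∑ ν : Fin m → Bool, σ ν * ∏ j, (if ν j then g j else 1)}

/-- The basic closed semialgebraic set determined by `g 1, …, g m`. -/
def KS {n m : ℕ} (g : Fin m → MvPolynomial (Fin n) ℝ) : Set (Fin n → ℝ) :=
  {x | ∀ i, 0 ≤ eval x (g i)}

/-- The real zero set of a polynomial. -/
def Zset {n : ℕ} (d : MvPolynomial (Fin n) ℝ) : Set (Fin n → ℝ) :=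
  {x | eval x d = 0}

/-- `Pos^E(𝒳)`: elements of the localization having a representation `f/d` with
`f·d ≥ 0 pointwise on 𝒳`. -/
def PosE {n : ℕ} (D : Submonoid (MvPolynomial (Fin n) ℝ)) (X : Set (Fin n → ℝ)) :
    Set (Localization D) :=
  {R | ∃ (f : MvPolynomial (Fin n) ℝ) (d : D), R = Localization.mk f d ∧
    ∀ x ∈ X, 0 ≤ eval x f * eval x (d : MvPolynomial (Fin n) ℝ)}

section NonnegFractions

variable {A K Ω : Type*} [CommRing A] [CommRing K] [LinearOrder K]

/-- Fractions `R ∈ D⁻¹A` with `R ⪰ 0` on `X`, where `ev x a` is the value of `a` at the point `x`: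
the analogue of `PosE` for any ring of `K`-valued functions. As `R` has no value at the zeros of
its denominator `d`, its sign is encoded by that of `f · d` in some representation `f/d`. -/
def nonnegFractions (ev : Ω → A →+* K) (D : Submonoid A) (X : Set Ω) : Set (Localization D) :=
  {R | ∃ (f : A) (d : D), R = Localization.mk f d ∧ ∀ x ∈ X, 0 ≤ ev x f * ev x d}

theorem exists_mul_mul_sq_eq_of_algebraMap_mul_mk_eq {D : Submonoid A} {a b f : A} {d : D}
    (h : algebraMap A (Localization D) b * Localization.mk f d = algebraMap A (Localization D) a) :
    ∃ u ∈ D, a * b * (d * u) ^ 2 = f * d * (b * u) ^ 2 := by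
  rw [← Localization.mk_one_eq_algebraMap, ← Localization.mk_one_eq_algebraMap,
    Localization.mk_mul, Localization.mk_eq_mk_iff, Localization.r_iff_exists] at h
  obtain ⟨u, hu⟩ := h
  have hcross : u * (b * f) = u * (a * d) := by
    simpa [mul_comm, mul_left_comm, mul_assoc] using hu
  exact ⟨u, u.2, by linear_combination -(b * d * u) * hcross⟩

theorem exists_isRelPrime_mk_eq [UniqueFactorizationMonoid A] {D : Submonoid A}
    (hD0 : (0 : A) ∉ D) (R : Localization D) :
    ∃ (a b c : A) (d : D), IsRelPrime a b ∧ (d : A) = b * c ∧ R = Localization.mk (a * c) d := by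
  induction R using Localization.induction_on with
  | H p =>
    obtain ⟨f, d⟩ := p
    have hd : (d : A) ≠ 0 := ne_of_mem_of_not_mem d.2 hD0
    obtain ⟨b, a, c, hrel, hb, ha⟩ :=
      UniqueFactorizationMonoid.exists_reduced_factors (d : A) hd f
    exact ⟨a, b, c, d, hrel.symm, by rw [← hb, mul_comm], by rw [← ha, mul_comm]⟩

theorem algebraMap_mul_mk_mul_eq {D : Submonoid A} {b c : A} {d : D} (hd : (d : A) = b * c)
    (a : A) :
    algebraMap A (Localization D) b * Localization.mk (a * c) d =
      algebraMap A (Localization D) a := by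
  rw [Localization.mk_eq_mk', IsLocalization.mul_mk'_eq_mk'_of_mul,
    IsLocalization.mk'_eq_iff_eq_mul, ← map_mul, hd, mul_left_comm]

theorem mem_nonnegFractions_of_forall_isRelPrime [IsStrictOrderedRing K]
    [UniqueFactorizationMonoid A] {ev : Ω → A →+* K} {D : Submonoid A} {X : Set Ω}
    (hD0 : (0 : A) ∉ D) {R : Localization D}
    (h : ∀ a b : A, b ≠ 0 → IsRelPrime a b →
      algebraMap A (Localization D) b * R = algebraMap A (Localization D) a →
      ∀ x ∈ X, 0 ≤ ev x a * ev x b) :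
    R ∈ nonnegFractions ev D X := by
  obtain ⟨a, b, c, d, hrel, hd, rfl⟩ := exists_isRelPrime_mk_eq hD0 R
  have hb : b ≠ 0 := left_ne_zero_of_mul (hd ▸ ne_of_mem_of_not_mem d.2 hD0)
  refine ⟨a * c, d, rfl, fun x hx => ?_⟩
  calc
    0 ≤ ev x a * ev x b * ev x c ^ 2 :=
      mul_nonneg (h a b hb hrel (algebraMap_mul_mk_mul_eq hd a) x hx) (sq_nonneg _)
    _ = ev x (a * c) * ev x d := by rw [hd, map_mul, map_mul]; ring

variable [IsStrictOrderedRing K] [TopologicalSpace Ω] [TopologicalSpace K] [ClosedIciTopology K]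

theorem nonneg_of_dense_ne_zero_of_nonneg_mul_sq {X : Set Ω} {g h : Ω → K} (hg : Continuous g)
    (hX : X ⊆ closure (X \ {x | h x = 0})) (hgh : ∀ x ∈ X, 0 ≤ g x * h x ^ 2) :
    ∀ x ∈ X, 0 ≤ g x := by
  have hnonneg : X \ {x | h x = 0} ⊆ g ⁻¹' Set.Ici 0 := fun x ⟨hxX, hhx⟩ =>
    nonneg_of_mul_nonneg_left (hgh x hxX) (sq_pos_of_ne_zero hhx)
  exact hX.trans (closure_minimal hnonneg (isClosed_Ici.preimage hg))

variable {ev : Ω → A →+* K} {D : Submonoid A} {X : Set Ω}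

theorem nonneg_mul_of_mem_nonnegFractions (hev : ∀ a, Continuous fun x => ev x a)
    (hdense : ∀ d ∈ D, X ⊆ closure (X \ {x | ev x d = 0})) {R : Localization D}
    (hR : R ∈ nonnegFractions ev D X) {a b : A}
    (hab : algebraMap A (Localization D) b * R = algebraMap A (Localization D) a) :
    ∀ x ∈ X, 0 ≤ ev x a * ev x b := by
  obtain ⟨f, d, rfl, hfd⟩ := hR
  obtain ⟨u, hu, heq⟩ := exists_mul_mul_sq_eq_of_algebraMap_mul_mk_eq hab
  simp only [← map_mul] at hfd ⊢
  refine nonneg_of_dense_ne_zero_of_nonneg_mul_sq (hev (a * b))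
    (hdense (d * u) (D.mul_mem d.2 hu)) fun x hx => ?_
  calc
    0 ≤ ev x (f * d) * ev x (b * u) ^ 2 := mul_nonneg (hfd x hx) (sq_nonneg _)
    _ = ev x (a * b) * ev x (d * u) ^ 2 := by
      rw [← map_pow, ← map_mul, ← heq, map_mul, map_pow]

theorem mem_nonnegFractions_iff_forall_mk (hev : ∀ a, Continuous fun x => ev x a)
    (hdense : ∀ d ∈ D, X ⊆ closure (X \ {x | ev x d = 0})) {R : Localization D} :
    R ∈ nonnegFractions ev D X ↔
      ∀ (f : A) (d : D), R = Localization.mk f d → ∀ x ∈ X, 0 ≤ ev x f * ev x d := by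
  refine ⟨fun hR f d hfd => nonneg_mul_of_mem_nonnegFractions hev hdense hR ?_, fun h => ?_⟩
  · rw [hfd, Localization.mk_eq_mk', IsLocalization.mk'_spec']
  · induction R using Localization.induction_on with
    | H p => exact ⟨p.1, p.2, rfl, h p.1 p.2 rfl⟩

theorem mem_nonnegFractions_iff_forall_isRelPrime [UniqueFactorizationMonoid A]
    (hev : ∀ a, Continuous fun x => ev x a) (hD0 : (0 : A) ∉ D)
    (hdense : ∀ d ∈ D, X ⊆ closure (X \ {x | ev x d = 0})) {R : Localization D} :
    R ∈ nonnegFractions ev D X ↔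
      ∀ a b : A, b ≠ 0 → IsRelPrime a b →
        algebraMap A (Localization D) b * R = algebraMap A (Localization D) a →
        ∀ x ∈ X, 0 ≤ ev x a * ev x b :=
  ⟨fun hR _ _ _ _ hab => nonneg_mul_of_mem_nonnegFractions hev hdense hR hab,
    mem_nonnegFractions_of_forall_isRelPrime hD0⟩

theorem algebraMap_mem_nonnegFractions_iff (hev : ∀ a, Continuous fun x => ev x a)
    (hdense : ∀ d ∈ D, X ⊆ closure (X \ {x | ev x d = 0})) {f : A} :
    algebraMap A (Localization D) f ∈ nonnegFractions ev D X ↔ ∀ x ∈ X, 0 ≤ ev x f := by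
  refine ⟨fun hf => ?_, fun hf => ⟨f, 1, (Localization.mk_one_eq_algebraMap f).symm, ?_⟩⟩
  · simpa using nonneg_mul_of_mem_nonnegFractions hev hdense hf (a := f) (b := 1) (by simp)
  · simpa using hf

theorem posE_characterizations_general [UniqueFactorizationMonoid A]
    (hev : ∀ a, Continuous fun x => ev x a) (hD0 : (0 : A) ∉ D)
    (hdense : ∀ d ∈ D, X ⊆ closure (X \ {x | ev x d = 0})) (R : Localization D) :
    (R ∈ nonnegFractions ev D X ↔
      ∀ (f : A) (d : D), R = Localization.mk f d → ∀ x ∈ X, 0 ≤ ev x f * ev x d) ∧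
    (R ∈ nonnegFractions ev D X ↔
      ∀ a b : A, b ≠ 0 → IsRelPrime a b →
        algebraMap A (Localization D) b * R = algebraMap A (Localization D) a →
        ∀ x ∈ X, 0 ≤ ev x a * ev x b) ∧
    (∀ f : A, algebraMap A (Localization D) f ∈ nonnegFractions ev D X ↔
      ∀ x ∈ X, 0 ≤ ev x f) :=
  ⟨mem_nonnegFractions_iff_forall_mk hev hdense,
    mem_nonnegFractions_iff_forall_isRelPrime hev hD0 hdense,
    fun _ => algebraMap_mem_nonnegFractions_iff hev hdense⟩

end NonnegFractions

/-- Equivalent characterizations of `R ⪰ 0` on a set `𝒳` such that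
`𝒳 \ Z(d)` is dense in `𝒳` for every `d ∈ D`. -/
theorem posE_characterizations
    {n : ℕ} (D : Submonoid (MvPolynomial (Fin n) ℝ))
    (hD0 : (0 : MvPolynomial (Fin n) ℝ) ∉ D)
    (X : Set (Fin n → ℝ))
    (hdense : ∀ d ∈ D, X ⊆ closure (X \ Zset d))
    (R : Localization D) :
    ((R ∈ PosE D X) ↔
      ∀ (f : MvPolynomial (Fin n) ℝ) (d : D), R = Localization.mk f d →
        ∀ x ∈ X, 0 ≤ eval x f * eval x (d : MvPolynomial (Fin n) ℝ)) ∧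
    ((R ∈ PosE D X) ↔
      ∀ a b : MvPolynomial (Fin n) ℝ, b ≠ 0 →
        (∀ c : MvPolynomial (Fin n) ℝ, c ∣ a → c ∣ b → IsUnit c) →
        algebraMap (MvPolynomial (Fin n) ℝ) (Localization D) b * R
          = algebraMap (MvPolynomial (Fin n) ℝ) (Localization D) a →
        ∀ x ∈ X, 0 ≤ eval x a * eval x b) ∧
    (∀ f : MvPolynomial (Fin n) ℝ,
      algebraMap (MvPolynomial (Fin n) ℝ) (Localization D) f ∈ PosE D X ↔
        ∀ x ∈ X, 0 ≤ eval x f) :=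
  posE_characterizations_general continuous_eval hD0 hdense R

end
end

section
/- Let D ⊆ ℝ[X₁,…,Xₙ]\{0} be a multiplicatively closed set with 1 ∈ D, let K ⊆ ℝⁿ be a compact set contained in ⋃_{d∈D} Z(d), and let c > 0. Then every convex, absorbent, symmetric subset N of E = D⁻¹ℝ[X₁,…,Xₙ] (i.e., every basic zero-neighborhood in the finest locally convex topology) contains an element R such that R ⪰ c·χ_K globally, i.e., there exist f ∈ ℝ[X₁,…,Xₙ] and d ∈ D with R = f/d and (f(x) − c·χ_K(x)·d(x))·d(x) ≥ 0 for all x ∈ ℝⁿ, where χ_K is the characteristic function of K. -/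
/-!
For a single `d ∈ D`, the element `ε / d²` lies in `N` for small `ε > 0` and exceeds `c` near
`Z(d)`. To treat all of `K` at once, finitely many such elements have to be averaged, and the loss
caused by the averaging has to be controlled even though `D` may be uncountable.

The set `D` is a union of countably many pieces, indexed by a finite set `T` of monomials and
`k : ℕ`: the `d ∈ D` supported in `T`, with coefficients bounded by `k`, and with
`(k + 1)⁻¹ / d^(2p) ∈ N`, where `p = |T| + 1`. A grid of mesh `1/s` in coefficient space shows that
`O(s^|T|)` members of a piece approximate each member within `O(1/s)`, uniformly on a compact set.
If `d(x) = 0`, the approximant `d'` has `d'(x)^(2p) = O(s^(-2p))`, and as `2p > |T|` this beats the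
number of averaged elements. Hence the average of `(k + 1)⁻¹ / d'^(2p)` over the approximants is as
large as desired on an open set containing all zeros in `K` of the members of the piece. Weighting
the pieces by a summable sequence, compactness of `K` leaves finitely many of them, and their
weighted sum is the required element of `N`.

A closed set `K` reduces to its intersection with a large ball, since `ε ∑ Xᵢ² ∈ N` exceeds `c`
outside such a ball.
-/

open MvPolynomial MeasureTheory Pointwise

noncomputable section

/-- A set is absorbent if every vector lies in some positive multiple of it. -/
def IsAbsorbent {E : Type*} [AddCommGroup E] [Module ℝ E] (U : Set E) : Prop :=
  ∀ x : E, ∃ l : ℝ, 0 < l ∧ x ∈ l • U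

/-- A set is symmetric if `λ • U ⊆ U` for all `λ ∈ [-1, 1]`. -/
def IsSymmetricSet {E : Type*} [AddCommGroup E] [Module ℝ E] (U : Set E) : Prop :=
  ∀ l : ℝ, l ∈ Set.Icc (-1 : ℝ) 1 → l • U ⊆ U

section ConvexAbsorbent

lemma sum_smul_mem_of_sum_le_one {𝕜 E ι : Type*} [Field 𝕜] [LinearOrder 𝕜] [IsStrictOrderedRing 𝕜]
    [AddCommGroup E] [Module 𝕜 E] {N : Set E} (hconv : Convex 𝕜 N) (h0 : (0 : E) ∈ N)
    {J : Finset ι} {w : ι → 𝕜} {y : ι → E} (hw : ∀ j ∈ J, 0 ≤ w j) (hsum : ∑ j ∈ J, w j ≤ 1)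
    (hy : ∀ j ∈ J, y j ∈ N) : ∑ j ∈ J, w j • y j ∈ N := by
  rcases (Finset.sum_nonneg hw).eq_or_lt with hzero | hpos
  · have hw0 := (Finset.sum_eq_zero_iff_of_nonneg hw).mp hzero.symm
    rwa [Finset.sum_eq_zero fun j hj => by rw [hw0 j hj, zero_smul]]
  · have hmem := hconv.smul_mem_of_zero_mem h0 (hconv.centerMass_mem hw hpos hy) ⟨hpos.le, hsum⟩
    rwa [Finset.centerMass, smul_inv_smul₀ hpos.ne'] at hmem

variable {E : Type*} [AddCommGroup E] [Module ℝ E] {N : Set E}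

lemma IsAbsorbent.zero_mem (habs : IsAbsorbent N) : (0 : E) ∈ N := by
  obtain ⟨l, hl, y, hy, hly⟩ := habs 0
  rwa [← (smul_eq_zero_iff_right hl.ne').mp hly]

lemma IsAbsorbent.exists_forall_inv_smul_mem (habs : IsAbsorbent N) (hconv : Convex ℝ N) (y : E) :
    ∃ l : ℝ, 0 < l ∧ ∀ k : ℝ, l ≤ k → k⁻¹ • y ∈ N := by
  obtain ⟨l, hl, z, hz, rfl⟩ := habs y
  refine ⟨l, hl, fun k hk => ?_⟩
  have hk0 : 0 < k := hl.trans_le hk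
  change k⁻¹ • l • z ∈ N
  rw [smul_smul]
  refine hconv.smul_mem_of_zero_mem habs.zero_mem hz ⟨by positivity, ?_⟩
  rwa [inv_mul_le_iff₀ hk0, mul_one]

end ConvexAbsorbent

section Approximation

lemma exists_finset_card_le_forall_abs_sub_lt {X ι : Type*} [Fintype ι] (v : X → ι → ℝ) (k : ℕ)
    (hv : ∀ a i, |v a i| ≤ k) {s : ℕ} (hs : 0 < s) :
    ∃ S : Finset X, S.card ≤ (2 * k * s + 1) ^ Fintype.card ι ∧
      ∀ a, ∃ b ∈ S, ∀ i, |v b i - v a i| < (s : ℝ)⁻¹ := by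
  classical
  have hs' : (0 : ℝ) < s := by exact_mod_cast hs
  let cell : X → ι → ℤ := fun a i => ⌊(s : ℝ) * v a i⌋
  let box : Finset (ι → ℤ) := Finset.Icc (fun _ => -(k * s : ℤ)) (fun _ => k * s)
  have cell_mem_box (a : X) : cell a ∈ box := by
    refine Finset.mem_Icc.mpr ⟨fun i => Int.le_floor.mpr ?_, fun i => Int.floor_le_iff.mpr ?_⟩ <;>
    · have := abs_le.mp (hv a i)
      push_cast
      nlinarith
  have card_box : box.card = (2 * k * s + 1) ^ Fintype.card ι := by
    simp only [box, Pi.card_Icc, Int.card_Icc, Finset.prod_const, Finset.card_univ]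
    congr 1
    lia
  obtain ⟨S, -, hbij⟩ := Set.exists_subset_bijOn Set.univ cell
  have hfin : S.Finite := hbij.finite_iff_finite.mpr <|
    box.finite_toSet.subset (Set.image_subset_iff.mpr fun a _ => cell_mem_box a)
  refine ⟨hfin.toFinset, ?_, fun a => ?_⟩
  · rw [← card_box]
    exact Finset.card_le_card_of_injOn cell (fun a _ => cell_mem_box a) (by simpa using hbij.injOn)
  · obtain ⟨b, hb, hcell⟩ := hbij.surjOn (Set.mem_image_of_mem cell (Set.mem_univ a))
    refine ⟨b, hfin.mem_toFinset.mpr hb, fun i => ?_⟩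
    have hlt : |(s : ℝ) * v b i - s * v a i| < 1 :=
      Int.abs_sub_lt_one_of_floor_eq_floor (congrFun hcell i)
    rw [← mul_sub, abs_mul, Nat.abs_cast] at hlt
    rwa [inv_eq_one_div, lt_div_iff₀' hs']

open Filter Topology in
lemma exists_pos_nat_mul_pow_mul_pow_lt_one (L k B : ℝ) (m : ℕ) :
    ∃ s : ℕ, 0 < s ∧ L * (k * s + 1) ^ m * (B / s) ^ (2 * (m + 1)) < 1 := by
  have hB : Tendsto (fun s : ℕ => B / (s : ℝ)) atTop (𝓝 0) :=
    tendsto_const_div_atTop_nhds_zero_nat B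
  have hkB : Tendsto (fun s : ℕ => k * B + B / (s : ℝ)) atTop (𝓝 (k * B + 0)) := hB.const_add _
  have hlim : Tendsto (fun s : ℕ => L * (k * B + B / (s : ℝ)) ^ m * (B / s) ^ (m + 2))
      atTop (𝓝 0) := by
    simpa using ((hkB.pow m).const_mul L).mul (hB.pow (m + 2))
  obtain ⟨s, hlt, hs⟩ := ((hlim.eventually_lt_const one_pos).and (eventually_gt_atTop 0)).exists
  refine ⟨s, hs, lt_of_eq_of_lt ?_ hlt⟩
  have hs' : (s : ℝ) ≠ 0 := by exact_mod_cast hs.ne'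
  have hfactor : (k * s + 1) * (B / s) = k * B + B / s := by field_simp
  rw [← hfactor, mul_pow]
  ring

variable {σ : Type*}

lemma abs_eval_le_mul_sum_abs_eval_monomial {R : Type*} [CommRing R] [LinearOrder R]
    [IsStrictOrderedRing R] {T : Finset (σ →₀ ℕ)} {δ : R} {p : MvPolynomial σ R}
    (hp : p.support ⊆ T) (hδ : ∀ α ∈ T, |coeff α p| ≤ δ) (x : σ → R) :
    |eval x p| ≤ δ * ∑ α ∈ T, |eval x (monomial α 1)| := by
  have heval : eval x p = ∑ α ∈ T, coeff α p * eval x (monomial α 1) := by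
    conv_lhs => rw [p.as_sum, map_sum]
    simp only [eval_monomial, one_mul]
    refine Finset.sum_subset hp fun α _ hα => ?_
    rw [notMem_support_iff.mp hα, zero_mul]
  rw [heval, Finset.mul_sum]
  refine (Finset.abs_sum_le_sum_abs _ _).trans (Finset.sum_le_sum fun α hα => ?_)
  rw [abs_mul]
  exact mul_le_mul_of_nonneg_right (hδ α hα) (abs_nonneg _)

lemma exists_finset_mul_card_mul_eval_pow_lt_one {X : Type*} (p : X → MvPolynomial σ ℝ)
    {T : Finset (σ →₀ ℕ)} {k : ℕ} (hT : ∀ a, (p a).support ⊆ T) (hk : ∀ a α, |coeff α (p a)| ≤ k)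
    {K : Set (σ → ℝ)} {B : ℝ} (hB : ∀ x ∈ K, ∑ α ∈ T, |eval x (monomial α 1)| ≤ B)
    {L : ℝ} (hL : 0 ≤ L) :
    ∃ S : Finset X, ∀ a, ∀ x ∈ K, eval x (p a) = 0 →
      ∃ b ∈ S, L * S.card * eval x (p b) ^ (2 * (T.card + 1)) < 1 := by
  classical
  obtain ⟨s, hs, hlt⟩ := exists_pos_nat_mul_pow_mul_pow_lt_one L (2 * k) B T.card
  obtain ⟨S, hcard, hS⟩ := exists_finset_card_le_forall_abs_sub_lt
    (fun a (α : T) => coeff α.1 (p a)) k (fun a α => hk a α) hs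
  refine ⟨S, fun a x hx hax => ?_⟩
  obtain ⟨b, hbS, hb⟩ := hS a
  have habs : |eval x (p b)| ≤ B / s := by
    calc |eval x (p b)| = |eval x (p b - p a)| := by rw [map_sub, hax, sub_zero]
      _ ≤ (s : ℝ)⁻¹ * ∑ α ∈ T, |eval x (monomial α 1)| :=
        abs_eval_le_mul_sum_abs_eval_monomial
          ((support_sub σ _ _).trans (Finset.union_subset (hT b) (hT a)))
          (fun α hα => by rw [coeff_sub]; exact (hb ⟨α, hα⟩).le) x
      _ ≤ (s : ℝ)⁻¹ * B := by gcongr; exact hB x hx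
      _ = B / s := inv_mul_eq_div _ _
  have hpow : eval x (p b) ^ (2 * (T.card + 1)) ≤ (B / s) ^ (2 * (T.card + 1)) := by
    rw [← (even_two_mul _).pow_abs]
    gcongr
  have hpow0 : 0 ≤ eval x (p b) ^ (2 * (T.card + 1)) := (even_two_mul _).pow_nonneg _
  have hcard' : (S.card : ℝ) ≤ (2 * k * s + 1) ^ T.card := by
    rw [Fintype.card_coe] at hcard
    exact_mod_cast hcard
  refine ⟨b, hbS, lt_of_le_of_lt ?_ hlt⟩
  gcongr

end Approximation

/-- The relation `R ⪰ φ` on all of `ℝ^σ`: some representation `R = f / d` satisfies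
`(f - φ d) d ≥ 0` pointwise. At a zero of `d` the inequality puts no constraint on `φ`. -/
def Dominates {σ : Type*} {D : Submonoid (MvPolynomial σ ℝ)} (R : Localization D)
    (φ : (σ → ℝ) → ℝ) : Prop :=
  ∃ (f : MvPolynomial σ ℝ) (d : D), R = Localization.mk f d ∧
    ∀ x, 0 ≤ (eval x f - φ x * eval x (d : MvPolynomial σ ℝ)) * eval x (d : MvPolynomial σ ℝ)

local infix:50 " ⪰ " => Dominates

section Dominates

variable {σ : Type*} {D : Submonoid (MvPolynomial σ ℝ)}

namespace Dominates

variable {R R' : Localization D} {φ ψ : (σ → ℝ) → ℝ}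

lemma mono (hR : R ⪰ φ) (hψ : ∀ x, ψ x ≤ φ x) : R ⪰ ψ := by
  obtain ⟨f, d, hfd, h⟩ := hR
  refine ⟨f, d, hfd, fun x => (h x).trans ?_⟩
  nlinarith [mul_nonneg (sub_nonneg.mpr (hψ x)) (sq_nonneg (eval x (d : MvPolynomial σ ℝ)))]

lemma indicator_mono {U V : Set (σ → ℝ)} {c : ℝ} (hR : R ⪰ fun x => c * V.indicator 1 x)
    (hc : 0 ≤ c) (hUV : U ⊆ V) : R ⪰ fun x => c * U.indicator 1 x :=
  hR.mono fun x => mul_le_mul_of_nonneg_left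
    (Set.indicator_le_indicator_of_subset hUV (fun _ => zero_le_one) x) hc

lemma mk_one (f : MvPolynomial σ ℝ) :
    (Localization.mk f 1 : Localization D) ⪰ fun x => eval x f :=
  ⟨f, 1, rfl, fun x => by simp⟩

lemma add (hR : R ⪰ φ) (hR' : R' ⪰ ψ) : R + R' ⪰ φ + ψ := by
  obtain ⟨f, d, rfl, hf⟩ := hR
  obtain ⟨g, e, rfl, hg⟩ := hR'
  refine ⟨_, _, Localization.add_mk f d g e, fun x => ?_⟩
  have h₁ := mul_nonneg (hf x) (sq_nonneg (eval x (e : MvPolynomial σ ℝ)))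
  have h₂ := mul_nonneg (hg x) (sq_nonneg (eval x (d : MvPolynomial σ ℝ)))
  simp only [map_add, map_mul, Submonoid.coe_mul, Pi.add_apply]
  linarith

lemma smul (hR : R ⪰ φ) {w : ℝ} (hw : 0 ≤ w) : w • R ⪰ w • φ := by
  obtain ⟨f, d, rfl, hf⟩ := hR
  refine ⟨w • f, d, Localization.smul_mk w f d, fun x => ?_⟩
  have := mul_nonneg hw (hf x)
  simp only [smul_eval, Pi.smul_apply, smul_eq_mul]
  linarith

lemma sum {ι : Type*} {J : Finset ι} {R : ι → Localization D} {φ : ι → (σ → ℝ) → ℝ}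
    (h : ∀ j ∈ J, R j ⪰ φ j) : ∑ j ∈ J, R j ⪰ ∑ j ∈ J, φ j := by
  classical
  induction J using Finset.induction_on with
  | empty => exact ⟨0, 1, by simp [Localization.mk_zero], fun x => by simp⟩
  | insert a J ha ih =>
    rw [Finset.sum_insert ha, Finset.sum_insert ha]
    exact (h a (J.mem_insert_self a)).add (ih fun j hj => h j (Finset.mem_insert_of_mem hj))

lemma sum_indicator_biUnion {ι : Type*} {J : Finset ι} {R : ι → Localization D}
    {U : ι → Set (σ → ℝ)} {c : ℝ} (hc : 0 ≤ c)
    (h : ∀ j ∈ J, R j ⪰ fun x => c * (U j).indicator 1 x) :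
    ∑ j ∈ J, R j ⪰ fun x => c * (⋃ j ∈ J, U j).indicator 1 x := by
  refine (Dominates.sum h).mono fun x => ?_
  rw [Finset.sum_apply, ← Finset.mul_sum]
  gcongr
  have hnonneg (j) (_ : j ∈ J) : 0 ≤ (U j).indicator (1 : (σ → ℝ) → ℝ) x :=
    Set.indicator_nonneg (fun _ _ => zero_le_one) x
  by_cases hx : x ∈ ⋃ j ∈ J, U j
  · obtain ⟨j, hj, hxj⟩ := Set.mem_iUnion₂.mp hx
    rw [Set.indicator_of_mem hx, ← Set.indicator_of_mem hxj (1 : (σ → ℝ) → ℝ)]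
    exact Finset.single_le_sum hnonneg hj
  · rw [Set.indicator_of_notMem hx]
    exact Finset.sum_nonneg hnonneg

lemma smul_mk_one_indicator {e : D} (he : ∀ x, 0 ≤ eval x (e : MvPolynomial σ ℝ)) {w : ℝ}
    (hw : 0 ≤ w) (c : ℝ) :
    w • (Localization.mk 1 e : Localization D) ⪰
      fun x => c * {y | c * eval y (e : MvPolynomial σ ℝ) ≤ w}.indicator 1 x := by
  refine ⟨w • 1, e, Localization.smul_mk w 1 e, fun x => mul_nonneg ?_ (he x)⟩
  rw [smul_eval, map_one, mul_one, sub_nonneg]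
  by_cases hx : c * eval x (e : MvPolynomial σ ℝ) ≤ w
  · simpa [Set.indicator_of_mem (show x ∈ {y | c * eval y (e : MvPolynomial σ ℝ) ≤ w} from hx)]
  · simpa [Set.indicator_of_notMem (show x ∉ {y | c * eval y (e : MvPolynomial σ ℝ) ≤ w} from hx)]

end Dominates

end Dominates

section Neighborhood

variable {σ : Type*} {D : Submonoid (MvPolynomial σ ℝ)} {N : Set (Localization D)}

/-- A piece of `D` on which the approximation of coefficient vectors is quantitative: supports in
`T`, coefficients bounded by `k`, and a uniform multiple of an inverse power in `N`. The exponent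
exceeds the dimension `|T|` of the coefficient space. -/
def boundedPiece (N : Set (Localization D)) (T : Finset (σ →₀ ℕ)) (k : ℕ) : Set D :=
  {d | (d : MvPolynomial σ ℝ).support ⊆ T ∧ (∀ α, |coeff α (d : MvPolynomial σ ℝ)| ≤ k) ∧
    (k + 1 : ℝ)⁻¹ • (Localization.mk 1 (d ^ (2 * (T.card + 1))) : Localization D) ∈ N}

lemma exists_mem_boundedPiece (hconv : Convex ℝ N) (habs : IsAbsorbent N) (d : D) :
    ∃ T k, d ∈ boundedPiece N T k := by
  obtain ⟨p, hp⟩ := d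
  obtain ⟨l, -, hl⟩ := habs.exists_forall_inv_smul_mem hconv
    (Localization.mk 1 (⟨p, hp⟩ ^ (2 * (p.support.card + 1))))
  obtain ⟨B, hB⟩ := (p.support.image fun α => |coeff α p|).bddAbove
  obtain ⟨k, hk⟩ := exists_nat_ge (max l B)
  refine ⟨p.support, k, subset_rfl, fun α => ?_, hl _ ?_⟩
  · by_cases hα : α ∈ p.support
    · exact (hB (Finset.mem_image_of_mem _ hα)).trans ((le_max_right l B).trans hk)
    · simp [notMem_support_iff.mp hα]
  · exact (le_max_left l B).trans (hk.trans (by simp))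

lemma exists_mem_dominates_zeros_boundedPiece (hconv : Convex ℝ N) (h0 : 0 ∈ N)
    {K : Set (σ → ℝ)} (hK : IsCompact K) (T : Finset (σ →₀ ℕ)) (k : ℕ) {c : ℝ} (hc : 0 ≤ c) :
    ∃ U, IsOpen U ∧ (∀ d ∈ boundedPiece N T k, K ∩ {x | eval x (d : MvPolynomial σ ℝ) = 0} ⊆ U) ∧
      ∃ R ∈ N, R ⪰ fun x => c * U.indicator 1 x := by
  obtain ⟨B, hB⟩ : ∃ B, ∀ x ∈ K, ∑ α ∈ T, |eval x (monomial α (1 : ℝ))| ≤ B := by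
    obtain ⟨B, hB⟩ := hK.bddAbove_image (f := fun x => ∑ α ∈ T, |eval x (monomial α (1 : ℝ))|)
      (continuous_finsetSum _ fun α _ => (continuous_eval _).abs).continuousOn
    exact ⟨B, fun x hx => hB (Set.mem_image_of_mem _ hx)⟩
  obtain ⟨S, hS⟩ := exists_finset_mul_card_mul_eval_pow_lt_one
    (fun d : boundedPiece N T k => (d.1 : MvPolynomial σ ℝ)) (fun d => d.2.1) (fun d => d.2.2.1) hB
    (L := c * (k + 1)) (by positivity)
  set m := 2 * (T.card + 1)
  let U (d : boundedPiece N T k) : Set (σ → ℝ) :=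
    {x | c * (k + 1) * S.card * eval x (d.1 : MvPolynomial σ ℝ) ^ m < 1}
  have hU (d) : IsOpen (U d) := isOpen_lt (((continuous_eval _).pow m).const_mul _) continuous_const
  have hdom (d) (hd : d ∈ S) : ((S.card : ℝ)⁻¹ * (k + 1 : ℝ)⁻¹) • Localization.mk 1 (d.1 ^ m) ⪰
      fun x => c * (U d).indicator 1 x := by
    have hcard : (0 : ℝ) < S.card := by exact_mod_cast Finset.card_pos.mpr ⟨d, hd⟩
    have hnonneg (x) : 0 ≤ eval x ((d.1 ^ m : D) : MvPolynomial σ ℝ) := by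
      rw [SubmonoidClass.coe_pow, map_pow]
      exact (even_two_mul _).pow_nonneg _
    refine (Dominates.smul_mk_one_indicator hnonneg (by positivity) c).indicator_mono hc
      fun x hx => ?_
    rw [Set.mem_ofPred_eq] at hx ⊢
    rw [SubmonoidClass.coe_pow, map_pow, ← mul_inv, ← one_div, le_div_iff₀ (by positivity)]
    linarith
  refine ⟨⋃ d ∈ S, U d, isOpen_biUnion fun d _ => hU d, ?_, _, ?_,
    Dominates.sum_indicator_biUnion hc hdom⟩
  · rintro d hd x ⟨hxK, hx⟩
    obtain ⟨e, heS, he⟩ := hS ⟨d, hd⟩ x hxK hx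
    exact Set.mem_biUnion heS he
  · simp only [mul_smul]
    refine sum_smul_mem_of_sum_le_one hconv h0 (fun _ _ => by positivity) ?_ fun d _ => d.2.2.2
    simpa using mul_inv_le_one

lemma exists_mem_dominates_of_countable_cover {ι : Type*} [Countable ι] (hconv : Convex ℝ N)
    (h0 : 0 ∈ N) {K : Set (σ → ℝ)} (hK : IsCompact K) {Z : ι → Set (σ → ℝ)} (hKZ : K ⊆ ⋃ i, Z i)
    (hZ : ∀ i, ∀ c : ℝ, 0 ≤ c →
      ∃ U, IsOpen U ∧ Z i ⊆ U ∧ ∃ R ∈ N, R ⪰ fun x => c * U.indicator 1 x)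
    {c : ℝ} (hc : 0 ≤ c) :
    ∃ R ∈ N, R ⪰ fun x => c * K.indicator 1 x := by
  obtain ⟨ω, hω, hωsum⟩ := (Set.countable_univ (α := ι)).exists_pos_forall_sum_le one_pos
  choose U hU hZU R hRN hR using fun i => hZ i (c / ω i) (div_nonneg hc (hω i).le)
  obtain ⟨F, hF⟩ := hK.elim_finite_subcover U hU (hKZ.trans (Set.iUnion_mono hZU))
  refine ⟨∑ i ∈ F, ω i • R i, sum_smul_mem_of_sum_le_one hconv h0 (fun i _ => (hω i).le)
    (hωsum F (Set.subset_univ _)) fun i _ => hRN i, ?_⟩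
  have hdom (i) (_ : i ∈ F) : ω i • R i ⪰ fun x => c * (U i).indicator 1 x :=
    ((hR i).smul (hω i).le).mono fun x => by
      rw [Pi.smul_apply, smul_eq_mul, ← mul_assoc, mul_div_cancel₀ c (hω i).ne']
  exact (Dominates.sum_indicator_biUnion hc hdom).indicator_mono hc hF

lemma exists_mem_dominates_indicator_of_isCompact [Countable σ] (hconv : Convex ℝ N)
    (habs : IsAbsorbent N) {K : Set (σ → ℝ)} (hK : IsCompact K)
    (hKZ : ∀ x ∈ K, ∃ d ∈ D, eval x d = 0) {c : ℝ} (hc : 0 ≤ c) :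
    ∃ R ∈ N, R ⪰ fun x => c * K.indicator 1 x := by
  refine exists_mem_dominates_of_countable_cover hconv habs.zero_mem hK
    (Z := fun i : Finset (σ →₀ ℕ) × ℕ =>
      ⋃ d ∈ boundedPiece N i.1 i.2, K ∩ {x | eval x (d : MvPolynomial σ ℝ) = 0})
    (fun x hx => ?_) (fun i C hC => ?_) hc
  · obtain ⟨d, hd, hxd⟩ := hKZ x hx
    obtain ⟨T, k, hTk⟩ := exists_mem_boundedPiece hconv habs ⟨d, hd⟩
    exact Set.mem_iUnion.mpr ⟨(T, k), Set.mem_biUnion hTk ⟨hx, hxd⟩⟩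
  · obtain ⟨U, hU, hZU, hR⟩ :=
      exists_mem_dominates_zeros_boundedPiece hconv habs.zero_mem hK i.1 i.2 hC
    exact ⟨U, hU, Set.iUnion₂_subset hZU, hR⟩

lemma exists_isCompact_mem_dominates_indicator_compl [Finite σ] (hconv : Convex ℝ N)
    (habs : IsAbsorbent N) (c : ℝ) :
    ∃ Q, IsCompact Q ∧ ∃ R ∈ N, R ⪰ fun x => c * Qᶜ.indicator 1 x := by
  have := Fintype.ofFinite σ
  obtain ⟨l, hl, hN⟩ := habs.exists_forall_inv_smul_mem hconv (Localization.mk (∑ i, X i ^ 2) 1)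
  refine ⟨Metric.closedBall 0 √(c * l), isCompact_closedBall _ _, _, hN l le_rfl,
    ((Dominates.mk_one _).smul (by positivity)).mono fun x => ?_⟩
  simp only [Pi.smul_apply, smul_eq_mul, map_sum, map_pow, eval_X, le_inv_mul_iff₀ hl]
  by_cases hx : ‖x‖ ≤ √(c * l)
  · simpa [hx] using Finset.sum_nonneg fun i _ => sq_nonneg (x i)
  · obtain ⟨i, hi⟩ : ∃ i, √(c * l) < |x i| := by
      simpa [pi_norm_le_iff_of_nonneg (Real.sqrt_nonneg (c * l))] using hx
    calc l * (c * (Metric.closedBall 0 √(c * l))ᶜ.indicator 1 x)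
      _ = c * l := by simp [hx, mul_comm]
      _ ≤ x i ^ 2 := by
        rw [← sq_abs]
        exact (Real.lt_sq_of_sqrt_lt hi).le
      _ ≤ ∑ i, x i ^ 2 := Finset.single_le_sum (fun i _ => sq_nonneg (x i)) (Finset.mem_univ i)

end Neighborhood

theorem basic_neighborhood_contains_large_element_general {σ : Type*} [Finite σ]
    (D : Submonoid (MvPolynomial σ ℝ)) (K : Set (σ → ℝ)) (hK : IsClosed K)
    (hKZ : ∀ x ∈ K, ∃ d ∈ D, eval x d = 0) (c : ℝ)
    (N : Set (Localization D)) (hconv : Convex ℝ N) (habs : IsAbsorbent N) :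
    ∃ R ∈ N, R ⪰ fun x => c * K.indicator 1 x := by
  obtain ⟨Q, hQ, R₁, hR₁N, hR₁⟩ :=
    exists_isCompact_mem_dominates_indicator_compl hconv habs (2 * |c|)
  obtain ⟨R₂, hR₂N, hR₂⟩ := exists_mem_dominates_indicator_of_isCompact hconv habs
    (hQ.inter_left hK) (fun x hx => hKZ x hx.1) (c := 2 * |c|) (by positivity)
  refine ⟨(1 / 2 : ℝ) • R₁ + (1 / 2 : ℝ) • R₂, hconv hR₁N hR₂N (by simp) (by simp) (by norm_num),
    ((hR₁.smul (by simp)).add (hR₂.smul (by simp))).mono fun x => ?_⟩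
  by_cases hxK : x ∈ K <;> by_cases hxQ : x ∈ Q <;> simp [hxK, hxQ, le_abs_self]

/-- If `K` is a compact subset of `⋃_{d ∈ D} Z(d)` and `c > 0`, then
every convex, absorbent, symmetric subset of `D⁻¹ℝ[X]` contains an element `R` with
`R ⪰ c·χ_K` globally. -/
theorem basic_neighborhood_contains_large_element
    {n : ℕ} (D : Submonoid (MvPolynomial (Fin n) ℝ))
    (hD0 : (0 : MvPolynomial (Fin n) ℝ) ∉ D)
    (K : Set (Fin n → ℝ)) (hKc : IsCompact K)
    (hKZ : K ⊆ ⋃ d ∈ (D : Set (MvPolynomial (Fin n) ℝ)), Zset d)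
    (c : ℝ) (hc : 0 < c)
    (N : Set (Localization D))
    (hconv : Convex ℝ N) (habs : IsAbsorbent N) (hsym : IsSymmetricSet N) :
    ∃ R ∈ N, ∃ (f : MvPolynomial (Fin n) ℝ) (d : D),
      R = Localization.mk f d ∧
      ∀ x : Fin n → ℝ,
        0 ≤ (eval x f - c * Set.indicator K 1 x * eval x (d : MvPolynomial (Fin n) ℝ))
              * eval x (d : MvPolynomial (Fin n) ℝ) :=
  basic_neighborhood_contains_large_element_general D K hKc.isClosed
    (fun x hx => by simpa [Zset] using hKZ hx) c N hconv habs

end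
end
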